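/- Let λ ≥ 1, 0 < σ < 1 and 0 < α < 1 with 0 < α − 2σ < 1. Then there exists a constant C = C(λ, σ, α) > 0 such that for every u ∈ C^α_+ with ∫₀^∞ |u(x)|/(1+x)^{1+2σ} dx < ∞, the function v(x) := (1/Γ(−2σ)) ∫₀^∞ (P_t^λ u(x) − u(x)) t^{−1−2σ} dt is well defined for every x > 0 (the integral converges absolutely), v belongs to C^{α−2σ}_+, and ‖v‖_{C^{α−2σ}_+} ≤ C ‖u‖_{C^α_+}. -/

import Mathlib

open Real MeasureTheory Set Filter

noncomputable section

/-- The modified Bessel function of the first kind `I_ν(z)`. -/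
def besselI (ν z : ℝ) : ℝ :=
  ∑' k : ℕ, (z / 2) ^ (2 * (k : ℝ) + ν) / ((Nat.factorial k : ℝ) * Real.Gamma ((k : ℝ) + ν + 1))

/-- The Bessel heat kernel `W_t^λ(x,y)`. -/
def besselHeatKernel (lam t x y : ℝ) : ℝ :=
  Real.sqrt (x * y) / (2 * t) * besselI (lam - 1 / 2) (x * y / (2 * t)) *
    Real.exp (-(x ^ 2 + y ^ 2) / (4 * t))

/-- The Bessel–Poisson kernel `P_t^λ(x,y)`, obtained by subordination. -/
def besselPoissonKernel (lam t x y : ℝ) : ℝ :=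
  t / (2 * Real.sqrt Real.pi) *
    ∫ s in Set.Ioi (0 : ℝ),
      s ^ (-(3 : ℝ) / 2) * Real.exp (-t ^ 2 / (4 * s)) * besselHeatKernel lam s x y

/-- The Bessel heat semigroup `W_t^λ u (x)`. -/
def heatSemigroup (lam : ℝ) (u : ℝ → ℝ) (t x : ℝ) : ℝ :=
  ∫ y in Set.Ioi (0 : ℝ), besselHeatKernel lam t x y * u y

/-- The Bessel–Poisson semigroup `P_t^λ f (x)`. -/
def poissonSemigroup (lam : ℝ) (f : ℝ → ℝ) (t x : ℝ) : ℝ :=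
  ∫ y in Set.Ioi (0 : ℝ), besselPoissonKernel lam t x y * f y

/-- The set of Hölder quotients of `f` on `(0,∞)`. -/
def holderRatioSet (α : ℝ) (f : ℝ → ℝ) : Set ℝ :=
  {r | ∃ x y : ℝ, 0 < x ∧ 0 < y ∧ x ≠ y ∧ r = |f x - f y| / |x - y| ^ α}

/-- The set of growth quotients `|f x|/x^α` of `f` on `(0,∞)`. -/
def growthRatioSet (α : ℝ) (f : ℝ → ℝ) : Set ℝ :=
  {r | ∃ x : ℝ, 0 < x ∧ r = |f x| / x ^ α}

/-- Membership in the Hölder space `C^α_+` (equal to `Lip_+` when `α = 1`). -/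
def MemHolderPlus (α : ℝ) (f : ℝ → ℝ) : Prop :=
  ContinuousOn f (Set.Ioi 0) ∧ BddAbove (holderRatioSet α f) ∧ BddAbove (growthRatioSet α f)

/-- The `C^α_+` norm. -/
def holderPlusNorm (α : ℝ) (f : ℝ → ℝ) : ℝ :=
  sSup (holderRatioSet α f) + sSup (growthRatioSet α f)

/-- `Γ(-σ)`, written through the functional equation `Γ(-σ) = Γ(2-σ)/((-σ)(1-σ))`. -/
def gammaNeg (σ : ℝ) : ℝ := Real.Gamma (2 - σ) / (-σ * (1 - σ))

/-- The kernel `K_σ^λ(x,y)`. -/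
def fracKernelK (lam σ x y : ℝ) : ℝ :=
  1 / (-gammaNeg σ) * ∫ t in Set.Ioi (0 : ℝ), besselHeatKernel lam t x y * t ^ (-1 - σ)

/-- `W_t^λ 1 (x)`. -/
def heatOne (lam t x : ℝ) : ℝ := ∫ y in Set.Ioi (0 : ℝ), besselHeatKernel lam t x y

/-- The function `B_σ^λ(x)`. -/
def fracFunB (lam σ x : ℝ) : ℝ :=
  1 / gammaNeg σ * ∫ t in Set.Ioi (0 : ℝ), (heatOne lam t x - 1) * t ^ (-1 - σ)

/-- The integer `m` with `m - 1 ≤ β < m`. -/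
def fracOrder (β : ℝ) : ℕ := Nat.floor β + 1

/-- The Segovia–Wheeden fractional derivative `∂_t^β F(t)`, a complex number. -/
def fracDeriv (β : ℝ) (F : ℝ → ℝ) (t : ℝ) : ℂ :=
  Complex.exp (-(Real.pi * ((fracOrder β : ℝ) - β)) * Complex.I) /
      Complex.ofReal (Real.Gamma ((fracOrder β : ℝ) - β)) *
    Complex.ofReal
      (∫ s in Set.Ioi (0 : ℝ),
        iteratedDeriv (fracOrder β) F (t + s) * s ^ ((fracOrder β : ℝ) - β - 1))

/-- The `k`-th term of the kernel `W_{1/4}^λ(x,y)`. -/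
def scaledTerm (lam : ℝ) (k : ℕ) (x y : ℝ) : ℝ :=
  2 * (x * y) ^ (2 * (k : ℝ) + lam) / ((Nat.factorial k : ℝ) * Real.Gamma ((k : ℝ) + lam + 1 / 2)) *
    Real.exp (-x ^ 2 - y ^ 2)

/-- The Bessel heat kernel at time `1/4`, written as a series. -/
def scaledKernel (lam x y : ℝ) : ℝ := ∑' k : ℕ, scaledTerm lam k x y

/-- The Dirichlet heat kernel of the half-line at time `1/4`. -/
def dirichletKernel (x y : ℝ) : ℝ :=
  2 / √π * Real.sinh (2 * (x * y)) * Real.exp (-x ^ 2 - y ^ 2)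

lemma factorial_mul_Gamma_add_three_halves (k : ℕ) :
    (Nat.factorial k : ℝ) * Real.Gamma ((k : ℝ) + 3 / 2) =
      (Nat.factorial (2 * k + 1) : ℝ) / 2 ^ (2 * k + 1) * √π := by
  have h := Real.Gamma_mul_Gamma_add_half ((k : ℝ) + 1)
  rw [Real.Gamma_nat_eq_factorial, show (k : ℝ) + 1 + 1 / 2 = k + 3 / 2 by ring,
    show (2 : ℝ) * ((k : ℝ) + 1) = ((2 * k + 1 : ℕ) : ℝ) + 1 by push_cast; ring,
    Real.Gamma_nat_eq_factorial,
    show (1 : ℝ) - (((2 * k + 1 : ℕ) : ℝ) + 1) = -((2 * k + 1 : ℕ) : ℝ) by ring,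
    Real.rpow_neg (by norm_num), Real.rpow_natCast] at h
  rw [h]; ring

lemma scaledTerm_one (k : ℕ) {x y : ℝ} (hx : 0 < x) (hy : 0 < y) :
    scaledTerm 1 k x y = 2 / √π * ((2 * (x * y)) ^ (2 * k + 1) / (Nat.factorial (2 * k + 1) : ℝ)) *
      Real.exp (-x ^ 2 - y ^ 2) := by
  unfold scaledTerm
  have hw : 0 < x * y := mul_pos hx hy
  have hpi : 0 < √π := Real.sqrt_pos.2 Real.pi_pos
  rw [show (k : ℝ) + 1 + 1 / 2 = k + 3 / 2 by ring, factorial_mul_Gamma_add_three_halves,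
    show (2 * (k : ℝ) + 1) = ((2 * k + 1 : ℕ) : ℝ) by push_cast; ring, Real.rpow_natCast, mul_pow]
  have : (0 : ℝ) < (Nat.factorial (2 * k + 1) : ℝ) := by positivity
  field_simp
  ring

lemma hasSum_dirichletKernel {x y : ℝ} (hx : 0 < x) (hy : 0 < y) :
    HasSum (fun k => scaledTerm 1 k x y) (dirichletKernel x y) := by
  have h := ((Real.hasSum_sinh (2 * (x * y))).mul_left (2 / √π)).mul_right
    (Real.exp (-x ^ 2 - y ^ 2))
  refine h.congr_fun ?_
  intro k
  exact (scaledTerm_one k hx hy)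

lemma scaledKernel_one {x y : ℝ} (hx : 0 < x) (hy : 0 < y) :
    scaledKernel 1 x y = dirichletKernel x y :=
  (hasSum_dirichletKernel hx hy).tsum_eq

lemma dirichletKernel_le_gaussian (x y : ℝ) :
    dirichletKernel x y ≤ Real.exp (-(x - y) ^ 2) := by
  have h1 : dirichletKernel x y =
      (√π)⁻¹ * (Real.exp (-(x - y) ^ 2) - Real.exp (-(x + y) ^ 2)) := by
    unfold dirichletKernel
    rw [Real.sinh_eq, show -(x - y) ^ 2 = 2 * (x * y) + (-x ^ 2 - y ^ 2) by ring,
      show -(x + y) ^ 2 = -(2 * (x * y)) + (-x ^ 2 - y ^ 2) by ring, Real.exp_add, Real.exp_add]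
    ring
  have hpi : (√π)⁻¹ ≤ 1 := by
    apply inv_le_one_of_one_le₀
    rw [Real.one_le_sqrt]
    linarith [Real.pi_gt_three]
  have hpi0 : 0 ≤ (√π)⁻¹ := by positivity
  rw [h1]
  have := Real.exp_pos (-(x + y) ^ 2)
  have := Real.exp_pos (-(x - y) ^ 2)
  nlinarith

lemma scaledTerm_nonneg {lam : ℝ} (hlam : 1 ≤ lam) (k : ℕ) {x y : ℝ} (hx : 0 < x) (hy : 0 < y) :
    0 ≤ scaledTerm lam k x y := by
  unfold scaledTerm
  have : 0 < Real.Gamma ((k : ℝ) + lam + 1 / 2) := Real.Gamma_pos_of_pos (by positivity)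
  have : 0 < x * y := mul_pos hx hy
  positivity

lemma Gamma_mul_rpow_le_Gamma_add {a μ : ℝ} (ha : 1 < a) (hμ : 0 ≤ μ) :
    Real.Gamma a * (a - 1) ^ μ ≤ Real.Gamma (a + μ) := by
  have hG1 : 0 < Real.Gamma (a - 1) := Real.Gamma_pos_of_pos (by linarith)
  have hG2 : 0 < Real.Gamma (a + μ) := Real.Gamma_pos_of_pos (by linarith)
  have hG : 0 < Real.Gamma a := Real.Gamma_pos_of_pos (by linarith)
  have hrec : Real.Gamma a = (a - 1) * Real.Gamma (a - 1) := by
    have := Real.Gamma_add_one (show a - 1 ≠ 0 by linarith)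
    rwa [sub_add_cancel] at this
  have hc := Real.convexOn_log_Gamma.2 (show a - 1 ∈ Ioi (0 : ℝ) by simp; linarith)
    (show a + μ ∈ Ioi (0 : ℝ) by simp; linarith) (show 0 ≤ μ / (1 + μ) by positivity)
    (show 0 ≤ 1 / (1 + μ) by positivity) (by field_simp; ring)
  simp only [smul_eq_mul, Function.comp] at hc
  rw [show μ / (1 + μ) * (a - 1) + 1 / (1 + μ) * (a + μ) = a by field_simp; ring] at hc
  have hlog : Real.log (Real.Gamma a) = Real.log (a - 1) + Real.log (Real.Gamma (a - 1)) := by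
    rw [hrec, Real.log_mul (by linarith) hG1.ne']
  have hpos : 0 < (a - 1) ^ μ := Real.rpow_pos_of_pos (by linarith) _
  rw [← Real.log_le_log_iff (by positivity) hG2, Real.log_mul hG.ne' hpos.ne',
    Real.log_rpow (by linarith)]
  have hc' : (1 + μ) * Real.log (Real.Gamma a) ≤
      μ * Real.log (Real.Gamma (a - 1)) + Real.log (Real.Gamma (a + μ)) := by
    calc _ ≤ (1 + μ) * _ := mul_le_mul_of_nonneg_left hc (by linarith)
      _ = _ := by field_simp
  nlinarith

lemma scaledTerm_le {lam : ℝ} (hlam : 1 ≤ lam) (j : ℕ) (hj : lam - 1 ≤ 2 * j) (k : ℕ) {x y : ℝ}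
    (hx : 0 < x) (hy : 0 < y) :
    scaledTerm lam k x y ≤
      scaledTerm 1 k x y + (2 * (j : ℝ) + 1) ^ (2 * j) * scaledTerm 1 (k + j) x y := by
  have hw : 0 < x * y := mul_pos hx hy
  set w := x * y with hwdef
  have hz : 0 < 2 * w := by positivity
  have hk : (0 : ℝ) < 2 * k + 1 := by positivity
  have hG : 0 < Real.Gamma ((k : ℝ) + 3 / 2) := Real.Gamma_pos_of_pos (by positivity)
  have hGa : 0 < Real.Gamma ((k : ℝ) + lam + 1 / 2) := Real.Gamma_pos_of_pos (by positivity)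
  have hfac : (0 : ℝ) < (Nat.factorial k : ℝ) := by positivity
  have term_le_mul : scaledTerm lam k x y ≤ (2 * w / (2 * k + 1)) ^ (lam - 1) * scaledTerm 1 k x y := by
    unfold scaledTerm
    rw [← hwdef, ← mul_assoc]
    refine mul_le_mul_of_nonneg_right ?_ (Real.exp_pos _).le
    have hg := Gamma_mul_rpow_le_Gamma_add (a := (k : ℝ) + 3 / 2) (μ := lam - 1)
      (by have : (0 : ℝ) ≤ k := by positivity
          linarith) (by linarith)
    rw [show (k : ℝ) + 3 / 2 + (lam - 1) = k + lam + 1 / 2 by ring,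
      show (k : ℝ) + 3 / 2 - 1 = (2 * k + 1) / 2 by ring] at hg
    rw [show (k : ℝ) + 1 + 1 / 2 = k + 3 / 2 by ring,
      show 2 * w / (2 * (k : ℝ) + 1) = w / ((2 * k + 1) / 2) by field_simp,
      Real.div_rpow hw.le (by positivity),
      show 2 * (k : ℝ) + lam = (lam - 1) + (2 * k + 1) by ring, Real.rpow_add hw]
    have hp : 0 < ((2 * (k : ℝ) + 1) / 2) ^ (lam - 1) := by positivity
    rw [div_mul_div_comm]
    rw [show 2 * (w ^ (lam - 1) * w ^ (2 * (k : ℝ) + 1)) = w ^ (lam - 1) * (2 * w ^ (2 * (k : ℝ) + 1))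
      by ring]
    apply div_le_div_of_nonneg_left (by positivity) (by positivity)
    calc _ = (Nat.factorial k : ℝ) * (Real.Gamma ((k : ℝ) + 3 / 2) * ((2 * k + 1) / 2) ^ (lam - 1)) := by
          ring
      _ ≤ _ := mul_le_mul_of_nonneg_left hg hfac.le
  have hb := scaledTerm_nonneg le_rfl k hx hy
  have rpow_le_one_add_pow : (2 * w / (2 * k + 1)) ^ (lam - 1) ≤ 1 + (2 * w / (2 * k + 1)) ^ (2 * j) := by
    have hq : 0 < 2 * w / (2 * k + 1) := by positivity
    rcases le_total (2 * w / (2 * k + 1)) 1 with h | h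
    · have := Real.rpow_le_one hq.le h (show 0 ≤ lam - 1 by linarith)
      have : 0 < (2 * w / (2 * k + 1)) ^ (2 * j) := by positivity
      linarith
    · have := Real.rpow_le_rpow_of_exponent_le h hj
      rw [show (2 * (j : ℝ)) = ((2 * j : ℕ) : ℝ) by push_cast; ring, Real.rpow_natCast] at this
      linarith
  have pow_mul_term_le : (2 * w / (2 * k + 1)) ^ (2 * j) * scaledTerm 1 k x y ≤
      (2 * (j : ℝ) + 1) ^ (2 * j) * scaledTerm 1 (k + j) x y := by
    rw [scaledTerm_one k hx hy, scaledTerm_one (k + j) hx hy, ← hwdef]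
    have hfl : (Nat.factorial (2 * (k + j) + 1) : ℝ) ≤
        Nat.factorial (2 * k + 1) * ((2 * j + 1) * (2 * k + 1)) ^ (2 * j) := by
      have h1 := Nat.factorial_mul_ascFactorial (2 * k + 1) (2 * j)
      have h2 := Nat.ascFactorial_le_pow_add (2 * k + 1) (2 * j)
      have h3 : (2 * k + 1 + 2 * j) ^ (2 * j) ≤ ((2 * j + 1) * (2 * k + 1)) ^ (2 * j) :=
        Nat.pow_le_pow_left (by nlinarith [Nat.zero_le (j * k)]) _
      have h4 : Nat.factorial (2 * (k + j) + 1) ≤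
          Nat.factorial (2 * k + 1) * ((2 * j + 1) * (2 * k + 1)) ^ (2 * j) := by
        rw [show 2 * (k + j) + 1 = 2 * k + 1 + 2 * j by ring, ← h1]
        exact Nat.mul_le_mul_left _ (h2.trans h3)
      exact_mod_cast h4
    have hf1 : (0 : ℝ) < Nat.factorial (2 * k + 1) := by positivity
    have hf2 : (0 : ℝ) < Nat.factorial (2 * (k + j) + 1) := by positivity
    have key : (2 * w / (2 * k + 1)) ^ (2 * j) * ((2 * w) ^ (2 * k + 1) / Nat.factorial (2 * k + 1)) ≤
        (2 * (j : ℝ) + 1) ^ (2 * j) * ((2 * w) ^ (2 * (k + j) + 1) / Nat.factorial (2 * (k + j) + 1)) := by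
      rw [div_pow, div_mul_div_comm, ← mul_div_assoc, div_le_div_iff₀ (by positivity) (by positivity)]
      calc _ ≤ (2 * w) ^ (2 * j) * (2 * w) ^ (2 * k + 1) *
            (Nat.factorial (2 * k + 1) * ((2 * j + 1) * (2 * k + 1)) ^ (2 * j)) :=
            mul_le_mul_of_nonneg_left hfl (by positivity)
        _ = _ := by
            rw [mul_pow (2 * (j : ℝ) + 1), show 2 * (k + j) + 1 = 2 * j + (2 * k + 1) by ring,
              pow_add (2 * w) (2 * j)]
            ring
    have hc : 0 ≤ 2 / √π * Real.exp (-x ^ 2 - y ^ 2) := by positivity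
    calc _ = (2 * w / (2 * k + 1)) ^ (2 * j) * ((2 * w) ^ (2 * k + 1) / Nat.factorial (2 * k + 1)) *
          (2 / √π * Real.exp (-x ^ 2 - y ^ 2)) := by ring
      _ ≤ _ := mul_le_mul_of_nonneg_right key hc
      _ = _ := by ring
  calc _ ≤ _ := term_le_mul
    _ ≤ (1 + (2 * w / (2 * k + 1)) ^ (2 * j)) * scaledTerm 1 k x y :=
      mul_le_mul_of_nonneg_right rpow_le_one_add_pow hb
    _ ≤ _ := by linarith

lemma summable_scaledTerm {lam : ℝ} (hlam : 1 ≤ lam) {x y : ℝ} (hx : 0 < x) (hy : 0 < y) :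
    Summable (fun k => scaledTerm lam k x y) := by
  obtain ⟨j, hj⟩ := exists_nat_ge (lam - 1)
  have hs := (hasSum_dirichletKernel hx hy).summable
  refine Summable.of_nonneg_of_le (fun k => scaledTerm_nonneg hlam k hx hy)
    (fun k => scaledTerm_le hlam j (by have : (0 : ℝ) ≤ j := by positivity
                                       linarith) k hx hy) ?_
  exact hs.add (((summable_nat_add_iff j).2 hs).mul_left _)

/-- Domination of the Bessel heat kernel by the Dirichlet heat kernel. -/
lemma exists_scaledKernel_le {lam : ℝ} (hlam : 1 ≤ lam) :
    ∃ C : ℝ, 1 ≤ C ∧ ∀ x y : ℝ, 0 < x → 0 < y →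
      scaledKernel lam x y ≤ C * dirichletKernel x y := by
  obtain ⟨j, hj⟩ := exists_nat_ge (lam - 1)
  refine ⟨1 + (2 * (j : ℝ) + 1) ^ (2 * j), by
    have : (0 : ℝ) ≤ (2 * (j : ℝ) + 1) ^ (2 * j) := by positivity
    linarith, fun x y hx hy => ?_⟩
  have hs := (hasSum_dirichletKernel hx hy).summable
  have hs' := (summable_nat_add_iff j).2 hs
  have hshift : ∑' k, scaledTerm 1 (k + j) x y ≤ dirichletKernel x y := by
    rw [← (hasSum_dirichletKernel hx hy).tsum_eq, ← hs.sum_add_tsum_nat_add j]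
    have : 0 ≤ ∑ i ∈ Finset.range j, scaledTerm 1 i x y :=
      Finset.sum_nonneg fun i _ => scaledTerm_nonneg le_rfl i hx hy
    linarith
  calc scaledKernel lam x y
      ≤ ∑' k, (scaledTerm 1 k x y + (2 * (j : ℝ) + 1) ^ (2 * j) * scaledTerm 1 (k + j) x y) :=
        (summable_scaledTerm hlam hx hy).tsum_le_tsum
          (fun k => scaledTerm_le hlam j (by have : (0 : ℝ) ≤ j := by positivity
                                             linarith) k hx hy) (hs.add (hs'.mul_left _))
    _ = dirichletKernel x y + (2 * (j : ℝ) + 1) ^ (2 * j) * ∑' k, scaledTerm 1 (k + j) x y := by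
        rw [hs.tsum_add (hs'.mul_left _), tsum_mul_left, (hasSum_dirichletKernel hx hy).tsum_eq]
    _ ≤ _ := by
        have : (0 : ℝ) ≤ (2 * (j : ℝ) + 1) ^ (2 * j) := by positivity
        nlinarith

lemma scaledKernel_nonneg {lam : ℝ} (hlam : 1 ≤ lam) {x y : ℝ} (hx : 0 < x) (hy : 0 < y) :
    0 ≤ scaledKernel lam x y :=
  tsum_nonneg fun k => scaledTerm_nonneg hlam k hx hy

lemma dirichletKernel_nonneg {x y : ℝ} (hx : 0 < x) (hy : 0 < y) : 0 ≤ dirichletKernel x y := by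
  rw [← scaledKernel_one hx hy]
  exact scaledKernel_nonneg le_rfl hx hy

lemma measurable_scaledTerm (lam : ℝ) (k : ℕ) :
    Measurable (fun p : ℝ × ℝ => scaledTerm lam k p.1 p.2) := by
  unfold scaledTerm
  fun_prop

lemma measurable_scaledKernel (lam : ℝ) :
    Measurable (fun p : ℝ × ℝ => scaledKernel lam p.1 p.2) :=
  Measurable.tsum fun k => measurable_scaledTerm lam k

lemma integrable_half_gaussian (x : ℝ) :
    Integrable (fun y => Real.exp (-(x - y) ^ 2 / 2)) := by
  have h := (integrable_exp_neg_mul_sq (show (0 : ℝ) < 1 / 2 by norm_num)).comp_sub_left x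
  refine h.congr (ae_of_all _ fun y => ?_)
  simp only
  congr 1; ring

lemma integral_half_gaussian_le (x : ℝ) :
    ∫ y in Ioi (0 : ℝ), Real.exp (-(x - y) ^ 2 / 2) ≤ √(2 * π) := by
  calc _ ≤ ∫ y, Real.exp (-(x - y) ^ 2 / 2) :=
        setIntegral_le_integral (integrable_half_gaussian x) (ae_of_all _ fun y => (Real.exp_pos _).le)
    _ = ∫ y, Real.exp (-(1 / 2) * y ^ 2) := by
        rw [← integral_sub_left_eq_self (fun y => Real.exp (-(1 / 2) * y ^ 2)) volume x]
        congr 1; ext y; congr 1; ring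
    _ = √(2 * π) := by rw [integral_gaussian]; congr 1; ring

lemma scaledKernel_mul_le {lam C A : ℝ} {φ : ℝ → ℝ} (hlam : 1 ≤ lam) {x y : ℝ}
    (hC : 0 ≤ C) (hdom : scaledKernel lam x y ≤ C * dirichletKernel x y)
    (hx : 0 < x) (hy : 0 < y) (hφ : |φ y| ≤ A * Real.exp ((x - y) ^ 2 / 2)) :
    |scaledKernel lam x y * φ y| ≤ C * A * Real.exp (-(x - y) ^ 2 / 2) := by
  have h0 := scaledKernel_nonneg hlam hx hy
  rw [abs_mul, abs_of_nonneg h0]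
  calc _ ≤ (C * Real.exp (-(x - y) ^ 2)) * (A * Real.exp ((x - y) ^ 2 / 2)) := by
        refine mul_le_mul ?_ hφ (abs_nonneg _) (by positivity)
        exact hdom.trans (mul_le_mul_of_nonneg_left (dirichletKernel_le_gaussian x y) hC)
    _ = C * A * (Real.exp (-(x - y) ^ 2) * Real.exp ((x - y) ^ 2 / 2)) := by ring
    _ = _ := by rw [← Real.exp_add]; congr 2; ring

lemma integrableOn_scaledKernel_mul {lam A : ℝ} {φ : ℝ → ℝ} (hlam : 1 ≤ lam) {x : ℝ}
    (hx : 0 < x) (hm : AEStronglyMeasurable φ (volume.restrict (Ioi 0)))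
    (hφ : ∀ y, 0 < y → |φ y| ≤ A * Real.exp ((x - y) ^ 2 / 2)) :
    IntegrableOn (fun y => scaledKernel lam x y * φ y) (Ioi 0) := by
  obtain ⟨C, hC, hdom⟩ := exists_scaledKernel_le hlam
  refine Integrable.mono' ((integrable_half_gaussian x).integrableOn.const_mul (C * A))
    (((measurable_scaledKernel lam).comp measurable_prodMk_left).aestronglyMeasurable.mul hm) ?_
  filter_upwards [ae_restrict_mem measurableSet_Ioi] with y hy
  exact scaledKernel_mul_le hlam (by linarith) (hdom x y hx hy) hx hy (hφ y hy)

/-- The heat operator at time `1/4` is bounded on functions of moderate Gaussian growth. -/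
lemma exists_integral_scaledKernel_mul_le {lam : ℝ} (hlam : 1 ≤ lam) :
    ∃ C : ℝ, 0 < C ∧ ∀ (A : ℝ) (φ : ℝ → ℝ) (x : ℝ), 0 < x →
      (∀ y, 0 < y → |φ y| ≤ A * Real.exp ((x - y) ^ 2 / 2)) →
      |∫ y in Ioi (0 : ℝ), scaledKernel lam x y * φ y| ≤ C * A := by
  obtain ⟨C, hC, hdom⟩ := exists_scaledKernel_le hlam
  refine ⟨C * √(2 * π), by positivity, fun A φ x hx hφ => ?_⟩
  have hA : 0 ≤ A := by
    have h1 := hφ x hx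
    have h2 : (0 : ℝ) ≤ A * Real.exp ((x - x) ^ 2 / 2) := (abs_nonneg _).trans h1
    simpa using h2
  calc _ ≤ ∫ y in Ioi (0 : ℝ), C * A * Real.exp (-(x - y) ^ 2 / 2) := by
        rw [← Real.norm_eq_abs]
        refine norm_integral_le_of_norm_le ((integrable_half_gaussian x).integrableOn.const_mul _) ?_
        filter_upwards [ae_restrict_mem measurableSet_Ioi] with y hy
        exact scaledKernel_mul_le hlam (by linarith) (hdom x y hx hy) hx hy (hφ y hy)
    _ = C * A * ∫ y in Ioi (0 : ℝ), Real.exp (-(x - y) ^ 2 / 2) := integral_const_mul _ _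
    _ ≤ C * A * √(2 * π) := mul_le_mul_of_nonneg_left (integral_half_gaussian_le x) (by positivity)
    _ = _ := by ring

lemma integrableOn_rpow_mul_exp_neg_sq {p : ℝ} (hp : -1 < p) :
    IntegrableOn (fun y : ℝ => y ^ p * Real.exp (-y ^ 2)) (Ioi 0) := by
  simpa [Real.rpow_two] using integrableOn_rpow_mul_exp_neg_rpow (p := 2) hp (by norm_num)

lemma integral_rpow_mul_exp_neg_sq {p : ℝ} (hp : -1 < p) :
    ∫ y in Ioi (0 : ℝ), y ^ p * Real.exp (-y ^ 2) = Real.Gamma ((p + 1) / 2) / 2 := by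
  have := integral_rpow_mul_exp_neg_rpow (p := 2) (q := p) (by norm_num) hp
  simp only [Real.rpow_two] at this
  rw [this]; ring

/-- The weighted moments of `g` that are the coefficients of the heat operator at time `1/4`. -/
def momentCoeff (lam : ℝ) (g : ℝ → ℝ) (k : ℕ) : ℝ :=
  2 / Real.Gamma ((k : ℝ) + lam + 1 / 2) *
    ∫ y in Ioi (0 : ℝ), y ^ (2 * (k : ℝ) + lam) * Real.exp (-y ^ 2) * g y

lemma Gamma_ratio_le {lam : ℝ} (hlam : 1 ≤ lam) (k : ℕ) :
    Real.Gamma ((k : ℝ) + lam / 2 + 1 / 2) / Real.Gamma ((k : ℝ) + lam + 1 / 2) ≤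
      Real.Gamma (lam / 2 + 1 / 2) / Real.Gamma (lam + 1 / 2) := by
  induction k with
  | zero => simp
  | succ k ih =>
    refine le_trans ?_ ih
    have hk : (0 : ℝ) ≤ k := by positivity
    have h1 : 0 < Real.Gamma ((k : ℝ) + lam / 2 + 1 / 2) := Real.Gamma_pos_of_pos (by linarith)
    have h2 : 0 < Real.Gamma ((k : ℝ) + lam + 1 / 2) := Real.Gamma_pos_of_pos (by linarith)
    rw [show ((k + 1 : ℕ) : ℝ) + lam / 2 + 1 / 2 = ((k : ℝ) + lam / 2 + 1 / 2) + 1 by push_cast; ring,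
      show ((k + 1 : ℕ) : ℝ) + lam + 1 / 2 = ((k : ℝ) + lam + 1 / 2) + 1 by push_cast; ring,
      Real.Gamma_add_one (by linarith), Real.Gamma_add_one (by linarith),
      div_le_div_iff₀ (mul_pos (by linarith) h2) h2]
    have h3 : 0 < Real.Gamma ((k : ℝ) + lam / 2 + 1 / 2) * Real.Gamma ((k : ℝ) + lam + 1 / 2) :=
      mul_pos h1 h2
    nlinarith

lemma integrableOn_moment {lam A : ℝ} {g : ℝ → ℝ} (hlam : 1 ≤ lam)
    (hm : AEStronglyMeasurable g (volume.restrict (Ioi 0)))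
    (hg : ∀ y, 0 < y → |g y| ≤ A * (1 + y ^ lam)) {p : ℝ} (hp : -1 < p) :
    IntegrableOn (fun y => y ^ p * Real.exp (-y ^ 2) * g y) (Ioi 0) := by
  have h1 := integrableOn_rpow_mul_exp_neg_sq hp
  have h2 := integrableOn_rpow_mul_exp_neg_sq (show -1 < p + lam by linarith)
  refine Integrable.mono' ((h1.add h2).const_mul A) ?_ ?_
  · exact (by fun_prop : Measurable fun y : ℝ => y ^ p * Real.exp (-y ^ 2)).aestronglyMeasurable.mul hm
  filter_upwards [ae_restrict_mem measurableSet_Ioi] with y hy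
  have hy' : 0 < y := hy
  have hw : 0 ≤ y ^ p * Real.exp (-y ^ 2) := by positivity
  rw [norm_mul, Real.norm_eq_abs, Real.norm_eq_abs, abs_of_nonneg hw]
  calc _ ≤ y ^ p * Real.exp (-y ^ 2) * (A * (1 + y ^ lam)) := mul_le_mul_of_nonneg_left (hg y hy) hw
    _ = _ := by simp only [Pi.add_apply, Real.rpow_add hy']; ring

lemma two_div_Gamma_mul_integral_abs_le {lam A : ℝ} {g : ℝ → ℝ} (hlam : 1 ≤ lam) (hA : 0 ≤ A)
    (hm : AEStronglyMeasurable g (volume.restrict (Ioi 0)))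
    (hg : ∀ y, 0 < y → |g y| ≤ A * (1 + y ^ lam)) (k : ℕ) :
    2 / Real.Gamma ((k : ℝ) + lam + 1 / 2) *
      ∫ y in Ioi (0 : ℝ), |y ^ (2 * (k : ℝ) + lam) * Real.exp (-y ^ 2) * g y| ≤
      A * (1 + Real.Gamma (lam / 2 + 1 / 2) / Real.Gamma (lam + 1 / 2)) := by
  have hk : (0 : ℝ) ≤ k := by positivity
  have hp : -1 < 2 * (k : ℝ) + lam := by linarith
  have hp' : -1 < 2 * (k : ℝ) + lam + lam := by linarith
  have hG : 0 < Real.Gamma ((k : ℝ) + lam + 1 / 2) := Real.Gamma_pos_of_pos (by linarith)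
  have h1 := integrableOn_rpow_mul_exp_neg_sq hp
  have h2 := integrableOn_rpow_mul_exp_neg_sq hp'
  have hle : ∫ y in Ioi (0 : ℝ), |y ^ (2 * (k : ℝ) + lam) * Real.exp (-y ^ 2) * g y| ≤
      ∫ y in Ioi (0 : ℝ), A * (y ^ (2 * (k : ℝ) + lam) * Real.exp (-y ^ 2) +
        y ^ (2 * (k : ℝ) + lam + lam) * Real.exp (-y ^ 2)) := by
    refine setIntegral_mono_on (integrableOn_moment hlam hm hg hp).abs ((h1.add h2).const_mul A)
      measurableSet_Ioi fun y hy => ?_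
    have hy' : 0 < y := hy
    have hw : 0 ≤ y ^ (2 * (k : ℝ) + lam) * Real.exp (-y ^ 2) := by positivity
    rw [abs_mul, abs_of_nonneg hw, Real.rpow_add hy' (2 * (k : ℝ) + lam) lam]
    calc _ ≤ _ * (A * (1 + y ^ lam)) := mul_le_mul_of_nonneg_left (hg y hy) hw
      _ = _ := by ring
  rw [integral_const_mul, integral_add h1 h2, integral_rpow_mul_exp_neg_sq hp,
    integral_rpow_mul_exp_neg_sq hp', show (2 * (k : ℝ) + lam + 1) / 2 = k + lam / 2 + 1 / 2 by ring,
    show (2 * (k : ℝ) + lam + lam + 1) / 2 = k + lam + 1 / 2 by ring] at hle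
  calc _ ≤ _ := mul_le_mul_of_nonneg_left hle (by positivity)
    _ = A * (1 + Real.Gamma ((k : ℝ) + lam / 2 + 1 / 2) / Real.Gamma ((k : ℝ) + lam + 1 / 2)) := by
        field_simp; ring
    _ ≤ _ := by
        have := Gamma_ratio_le hlam k
        gcongr

lemma abs_momentCoeff_le {lam A : ℝ} {g : ℝ → ℝ} (hlam : 1 ≤ lam) (hA : 0 ≤ A)
    (hm : AEStronglyMeasurable g (volume.restrict (Ioi 0)))
    (hg : ∀ y, 0 < y → |g y| ≤ A * (1 + y ^ lam)) (k : ℕ) :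
    |momentCoeff lam g k| ≤ A * (1 + Real.Gamma (lam / 2 + 1 / 2) / Real.Gamma (lam + 1 / 2)) := by
  refine le_trans ?_ (two_div_Gamma_mul_integral_abs_le hlam hA hm hg k)
  have hG : 0 < Real.Gamma ((k : ℝ) + lam + 1 / 2) := Real.Gamma_pos_of_pos (by positivity)
  unfold momentCoeff
  rw [abs_mul, abs_of_pos (by positivity : 0 < 2 / Real.Gamma ((k : ℝ) + lam + 1 / 2))]
  exact mul_le_mul_of_nonneg_left (abs_integral_le_integral_abs) (by positivity)

lemma scaledTerm_eq {lam : ℝ} (k : ℕ) {x y : ℝ} (hx : 0 < x) (hy : 0 < y) :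
    scaledTerm lam k x y = x ^ lam * Real.exp (-x ^ 2) * ((x ^ 2) ^ k / (Nat.factorial k : ℝ)) *
      (2 / Real.Gamma ((k : ℝ) + lam + 1 / 2)) * (y ^ (2 * (k : ℝ) + lam) * Real.exp (-y ^ 2)) := by
  unfold scaledTerm
  have h : x ^ (2 * (k : ℝ) + lam) = (x ^ 2) ^ k * x ^ lam := by
    rw [Real.rpow_add hx, show (2 * (k : ℝ)) = ((2 * k : ℕ) : ℝ) by push_cast; ring,
      Real.rpow_natCast, pow_mul]
  rw [Real.mul_rpow hx.le hy.le, h, sub_eq_add_neg, Real.exp_add]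
  field_simp

/-- Expansion of the heat operator at time `1/4` as a Poisson average of moments. -/
lemma hasSum_momentCoeff {lam A : ℝ} {g : ℝ → ℝ} (hlam : 1 ≤ lam) (hA : 0 ≤ A)
    (hm : AEStronglyMeasurable g (volume.restrict (Ioi 0)))
    (hg : ∀ y, 0 < y → |g y| ≤ A * (1 + y ^ lam)) {x : ℝ} (hx : 0 < x) :
    HasSum (fun k : ℕ => x ^ lam * Real.exp (-x ^ 2) *
      (momentCoeff lam g k * ((x ^ 2) ^ k / (Nat.factorial k : ℝ))))
      (∫ y in Ioi (0 : ℝ), scaledKernel lam x y * g y) := by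
  set c : ℕ → ℝ := fun k => x ^ lam * Real.exp (-x ^ 2) * ((x ^ 2) ^ k / (Nat.factorial k : ℝ)) *
      (2 / Real.Gamma ((k : ℝ) + lam + 1 / 2)) with hc
  set F : ℕ → ℝ → ℝ := fun k y => c k * (y ^ (2 * (k : ℝ) + lam) * Real.exp (-y ^ 2) * g y) with hF
  have hc0 : ∀ k, 0 ≤ c k := fun k => by
    have hG : 0 < Real.Gamma ((k : ℝ) + lam + 1 / 2) := Real.Gamma_pos_of_pos (by positivity)
    simp only [hc]; positivity
  have hint : ∀ k, Integrable (F k) (volume.restrict (Ioi 0)) := fun k =>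
    (integrableOn_moment hlam hm hg (by have : (0 : ℝ) ≤ k := by positivity
                                        linarith)).const_mul _
  have hsum : Summable fun k => ∫ y in Ioi (0 : ℝ), ‖F k y‖ := by
    have hexp : Summable fun k : ℕ => (x ^ 2) ^ k / (Nat.factorial k : ℝ) :=
      Real.summable_pow_div_factorial _
    refine Summable.of_nonneg_of_le (fun k => integral_nonneg fun y => norm_nonneg _) (fun k => ?_)
      (hexp.mul_left (x ^ lam * Real.exp (-x ^ 2) *
        (A * (1 + Real.Gamma (lam / 2 + 1 / 2) / Real.Gamma (lam + 1 / 2)))))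
    have hmom := two_div_Gamma_mul_integral_abs_le hlam hA hm hg k
    simp only [hF, norm_mul (c k), Real.norm_eq_abs, abs_of_nonneg (hc0 k)]
    rw [integral_const_mul]
    calc _ = x ^ lam * Real.exp (-x ^ 2) * ((x ^ 2) ^ k / (Nat.factorial k : ℝ)) *
          (2 / Real.Gamma ((k : ℝ) + lam + 1 / 2) *
            ∫ y in Ioi (0 : ℝ), |y ^ (2 * (k : ℝ) + lam) * Real.exp (-y ^ 2) * g y|) := by
          simp only [hc]; ring
      _ ≤ _ := mul_le_mul_of_nonneg_left hmom (by positivity)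
      _ = _ := by ring
  have h := hasSum_integral_of_summable_integral_norm hint hsum
  have e1 : ∫ y in Ioi (0 : ℝ), ∑' k, F k y = ∫ y in Ioi (0 : ℝ), scaledKernel lam x y * g y := by
    refine setIntegral_congr_fun measurableSet_Ioi fun y hy => ?_
    simp only [scaledKernel]
    rw [← tsum_mul_right]
    refine tsum_congr fun k => ?_
    rw [scaledTerm_eq k hx hy]
    simp only [hF, hc]; ring
  rw [e1] at h
  refine h.congr_fun fun k => ?_
  simp only [hF]
  rw [integral_const_mul]
  simp only [hc, momentCoeff]; ring

lemma momentCoeff_rpow {lam : ℝ} (hlam : 1 ≤ lam) (k : ℕ) :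
    momentCoeff lam (fun y => y ^ lam) k = 1 := by
  have hk : (0 : ℝ) ≤ k := by positivity
  have hG : 0 < Real.Gamma ((k : ℝ) + lam + 1 / 2) := Real.Gamma_pos_of_pos (by linarith)
  unfold momentCoeff
  have : ∫ y in Ioi (0 : ℝ), y ^ (2 * (k : ℝ) + lam) * Real.exp (-y ^ 2) * y ^ lam =
      ∫ y in Ioi (0 : ℝ), y ^ (2 * (k : ℝ) + lam + lam) * Real.exp (-y ^ 2) := by
    refine setIntegral_congr_fun measurableSet_Ioi fun y hy => ?_
    rw [Real.rpow_add hy (2 * (k : ℝ) + lam)]; ring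
  rw [this, integral_rpow_mul_exp_neg_sq (by linarith),
    show (2 * (k : ℝ) + lam + lam + 1) / 2 = k + lam + 1 / 2 by ring]
  field_simp

/-- `y ^ λ` is invariant under the heat semigroup. -/
lemma integral_scaledKernel_mul_rpow {lam : ℝ} (hlam : 1 ≤ lam) {x : ℝ} (hx : 0 < x) :
    ∫ y in Ioi (0 : ℝ), scaledKernel lam x y * y ^ lam = x ^ lam := by
  have h := hasSum_momentCoeff (lam := lam) (A := 1) (g := fun y => y ^ lam) hlam zero_le_one
    (by fun_prop : Measurable fun y : ℝ => y ^ lam).aestronglyMeasurable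
    (fun y hy => by
      rw [abs_of_nonneg (by positivity)]
      linarith) hx
  simp only [momentCoeff_rpow hlam, one_mul] at h
  have hexp : HasSum (fun k : ℕ => (x ^ 2) ^ k / (Nat.factorial k : ℝ)) (Real.exp (x ^ 2)) := by
    rw [Real.exp_eq_exp_ℝ]
    exact NormedSpace.expSeries_div_hasSum_exp (x ^ 2)
  rw [h.unique (hexp.mul_left _), mul_assoc, ← Real.exp_add]
  simp

lemma integrableOn_scaledKernel_mul_rpow {lam : ℝ} (hlam : 1 ≤ lam) {x : ℝ} (hx : 0 < x) :
    IntegrableOn (fun y => scaledKernel lam x y * y ^ lam) (Ioi 0) := by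
  by_contra h
  have h1 := integral_scaledKernel_mul_rpow hlam hx
  rw [integral_undef h] at h1
  exact (Real.rpow_pos_of_pos hx lam).ne h1

lemma hasDerivAt_tsum_pow_div_factorial {a : ℕ → ℝ} {B : ℝ} (ha : ∀ k, |a k| ≤ B) (X : ℝ) :
    HasDerivAt (fun X => ∑' k, a k * (X ^ k / (Nat.factorial k : ℝ)))
      (∑' k, a (k + 1) * (X ^ k / (Nat.factorial k : ℝ))) X := by
  set R : ℝ := |X| + 1 with hR
  have hR0 : 0 < R := by positivity
  set G' : ℕ → ℝ → ℝ := fun k Y => a k * ((k : ℝ) * Y ^ (k - 1) / (Nat.factorial k : ℝ)) with hG'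
  have hsucc : ∀ k Y, G' (k + 1) Y = a (k + 1) * (Y ^ k / (Nat.factorial k : ℝ)) := fun k Y => by
    simp only [hG', Nat.factorial_succ, Nat.add_sub_cancel]
    push_cast
    have : (0 : ℝ) < Nat.factorial k := by positivity
    field_simp
  have hB : 0 ≤ B := (abs_nonneg _).trans (ha 0)
  set U : ℕ → ℝ := fun k => B * ((k : ℝ) * R ^ (k - 1) / (Nat.factorial k : ℝ)) with hU
  have hUs : Summable U := by
    rw [← summable_nat_add_iff 1]
    refine ((Real.summable_pow_div_factorial R).mul_left B).congr fun k => ?_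
    simp only [hU, Nat.factorial_succ, Nat.add_sub_cancel]
    push_cast
    have : (0 : ℝ) < Nat.factorial k := by positivity
    field_simp
  have hbound : ∀ k, ∀ Y ∈ Metric.ball (0 : ℝ) R, ‖G' k Y‖ ≤ U k := fun k Y hY => by
    have hY' : |Y| ≤ R := by simpa using (Metric.mem_ball.1 hY).le
    simp only [hG', hU, Real.norm_eq_abs, abs_mul, abs_div, abs_pow, Nat.abs_cast]
    have := ha k
    gcongr
  have hX : X ∈ Metric.ball (0 : ℝ) R := by simp [hR]
  have h := hasDerivAt_tsum_of_isPreconnected (g := fun k Y => a k * (Y ^ k / (Nat.factorial k : ℝ)))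
    (g' := G') hUs Metric.isOpen_ball (convex_ball (0 : ℝ) R).isPreconnected
    (fun k Y _ => by
      have := ((hasDerivAt_pow k Y).div_const (Nat.factorial k : ℝ)).const_mul (a k)
      exact this) hbound (Metric.mem_ball_self hR0)
    (by
      refine summable_of_ne_finset_zero (s := {0}) fun k hk => ?_
      simp only [Finset.mem_singleton] at hk
      simp [hk]) hX
  have hs : Summable fun k => G' k X := Summable.of_norm_bounded hUs fun k => hbound k X hX
  rw [hs.tsum_eq_zero_add] at h
  simp only [hsucc] at h
  have h0 : G' 0 X = 0 := by simp [hG']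
  rwa [h0, zero_add] at h

lemma moment_integration_by_parts {L : ℝ} {g g' : ℝ → ℝ}
    (hderiv : ∀ y, 0 < y → HasDerivAt g (g' y) y)
    (hm : AEStronglyMeasurable g (volume.restrict (Ioi 0)))
    (hm' : AEStronglyMeasurable g' (volume.restrict (Ioi 0)))
    (hL : 0 ≤ L) (hg : ∀ y, 0 < y → |g y| ≤ L * y) (hg' : ∀ y, 0 < y → |g' y| ≤ L)
    {p : ℝ} (hp : 0 ≤ p) :
    (p + 1) * (∫ y in Ioi (0 : ℝ), y ^ p * Real.exp (-y ^ 2) * g y) -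
      2 * (∫ y in Ioi (0 : ℝ), y ^ (p + 2) * Real.exp (-y ^ 2) * g y) +
      ∫ y in Ioi (0 : ℝ), y ^ (p + 1) * Real.exp (-y ^ 2) * g' y = 0 := by
  have hgl : ∀ y, 0 < y → |g y| ≤ L * (1 + y ^ (1 : ℝ)) := fun y hy => by
    rw [Real.rpow_one]
    nlinarith [hg y hy]
  have hgl' : ∀ y, 0 < y → |g' y| ≤ L * (1 + y ^ (1 : ℝ)) := fun y hy => by
    rw [Real.rpow_one]
    nlinarith [hg' y hy]
  have i1 := integrableOn_moment le_rfl hm hgl (show -1 < p by linarith)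
  have i2 := integrableOn_moment le_rfl hm hgl (show -1 < p + 2 by linarith)
  have i3 := integrableOn_moment le_rfl hm' hgl' (show -1 < p + 1 by linarith)
  have i0 := integrableOn_moment le_rfl hm hgl (show -1 < p + 1 by linarith)
  set f : ℝ → ℝ := fun y => y ^ (p + 1) * Real.exp (-y ^ 2) * g y with hf
  set f' : ℝ → ℝ := fun y => (p + 1) * (y ^ p * Real.exp (-y ^ 2) * g y) -
    2 * (y ^ (p + 2) * Real.exp (-y ^ 2) * g y) + y ^ (p + 1) * Real.exp (-y ^ 2) * g' y with hf'
  have hd : ∀ y ∈ Ioi (0 : ℝ), HasDerivAt f (f' y) y := fun y hy => by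
    have hy' : 0 < y := hy
    have h1 : HasDerivAt (fun y : ℝ => y ^ (p + 1)) ((p + 1) * y ^ p) y := by
      have := Real.hasDerivAt_rpow_const (x := y) (p := p + 1) (Or.inl hy'.ne')
      rwa [add_sub_cancel_right] at this
    have h2 : HasDerivAt (fun y : ℝ => Real.exp (-y ^ 2)) (Real.exp (-y ^ 2) * (-(2 * y))) y := by
      have := ((hasDerivAt_pow 2 y).neg).exp
      simpa using this
    refine ((h1.mul h2).mul (hderiv y hy')).congr_deriv ?_
    simp only [hf', Pi.mul_apply]
    rw [show p + 2 = p + 1 + 1 by ring, Real.rpow_add_one hy'.ne' (p + 1)]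
    ring
  have hint : IntegrableOn f' (Ioi 0) := ((i1.const_mul _).sub (i2.const_mul _)).add i3
  have htop := tendsto_zero_of_hasDerivAt_of_integrableOn_Ioi hd hint i0
  have hf0 : f 0 = 0 := by simp [hf, Real.zero_rpow (show p + 1 ≠ 0 by linarith)]
  have hcont : ContinuousWithinAt f (Ici 0) 0 := by
    unfold ContinuousWithinAt
    rw [hf0]
    have hub : Tendsto (fun y : ℝ => L * y * (y ^ (p + 1) * Real.exp (-y ^ 2))) (nhdsWithin 0 (Ici 0))
        (nhds 0) := by
      have hc : Continuous fun y : ℝ => L * y * (y ^ (p + 1) * Real.exp (-y ^ 2)) := by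
        have := Real.continuous_rpow_const (show 0 ≤ p + 1 by linarith)
        fun_prop
      have := hc.tendsto 0
      simp only [mul_zero, zero_mul] at this
      exact this.mono_left nhdsWithin_le_nhds
    refine squeeze_zero_norm' ?_ hub
    filter_upwards [self_mem_nhdsWithin] with y hy
    rcases (show (0 : ℝ) ≤ y from hy).eq_or_lt with h | h
    · rw [← h, hf0]; simp
    · simp only [hf, norm_mul, Real.norm_eq_abs]
      rw [abs_of_nonneg (by positivity : 0 ≤ y ^ (p + 1)), Real.abs_exp, mul_comm (L * y)]
      exact mul_le_mul_of_nonneg_left (hg y h) (by positivity)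
  have h := integral_Ioi_of_hasDerivAt_of_tendsto hcont hd hint htop
  have i12 : IntegrableOn (fun y => (p + 1) * (y ^ p * Real.exp (-y ^ 2) * g y) -
    2 * (y ^ (p + 2) * Real.exp (-y ^ 2) * g y)) (Ioi 0) := (i1.const_mul _).sub (i2.const_mul _)
  rw [hf0, sub_zero] at h
  simp only [hf'] at h
  rw [integral_add i12 i3,
    integral_sub (i1.const_mul _) (i2.const_mul _), integral_const_mul, integral_const_mul] at h
  exact h

lemma abs_momentCoeff_succ_sub_le {lam L : ℝ} {g g' : ℝ → ℝ} (hlam : 1 ≤ lam)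
    (hderiv : ∀ y, 0 < y → HasDerivAt g (g' y) y)
    (hm : AEStronglyMeasurable g (volume.restrict (Ioi 0)))
    (hm' : AEStronglyMeasurable g' (volume.restrict (Ioi 0)))
    (hL : 0 ≤ L) (hg : ∀ y, 0 < y → |g y| ≤ L * y) (hg' : ∀ y, 0 < y → |g' y| ≤ L) (k : ℕ) :
    |momentCoeff lam g (k + 1) - momentCoeff lam g k| ≤
      (1 + lam) * L / 2 * momentCoeff (lam + 1) (fun _ => 1) k := by
  have hk : (0 : ℝ) ≤ k := by positivity
  have hG : 0 < Real.Gamma ((k : ℝ) + lam + 1 / 2) := Real.Gamma_pos_of_pos (by linarith)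
  set p : ℝ := 2 * (k : ℝ) + lam with hp
  have hibp := moment_integration_by_parts hderiv hm hm' hL hg hg' (show 0 ≤ p by linarith)
  have hj := integrableOn_rpow_mul_exp_neg_sq (show -1 < p + 1 by linarith)
  have b1 : |∫ y in Ioi (0 : ℝ), y ^ p * Real.exp (-y ^ 2) * g y| ≤
      L * ∫ y in Ioi (0 : ℝ), y ^ (p + 1) * Real.exp (-y ^ 2) := by
    rw [← integral_const_mul, ← Real.norm_eq_abs]
    refine norm_integral_le_of_norm_le (hj.const_mul L) ?_
    filter_upwards [ae_restrict_mem measurableSet_Ioi] with y hy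
    have hy' : 0 < y := hy
    rw [norm_mul, Real.norm_eq_abs, Real.norm_eq_abs, abs_of_nonneg (by positivity)]
    calc _ ≤ y ^ p * Real.exp (-y ^ 2) * (L * y) :=
          mul_le_mul_of_nonneg_left (hg y hy) (by positivity)
      _ = _ := by rw [Real.rpow_add_one hy'.ne']; ring
  have b2 : |∫ y in Ioi (0 : ℝ), y ^ (p + 1) * Real.exp (-y ^ 2) * g' y| ≤
      L * ∫ y in Ioi (0 : ℝ), y ^ (p + 1) * Real.exp (-y ^ 2) := by
    rw [← integral_const_mul, ← Real.norm_eq_abs]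
    refine norm_integral_le_of_norm_le (hj.const_mul L) ?_
    filter_upwards [ae_restrict_mem measurableSet_Ioi] with y hy
    have hy' : 0 < y := hy
    rw [norm_mul, Real.norm_eq_abs, Real.norm_eq_abs, abs_of_nonneg (by positivity)]
    calc _ ≤ y ^ (p + 1) * Real.exp (-y ^ 2) * L :=
          mul_le_mul_of_nonneg_left (hg' y hy) (by positivity)
      _ = _ := by ring
  unfold momentCoeff
  simp only [mul_one]
  rw [show ((k + 1 : ℕ) : ℝ) + lam + 1 / 2 = ((k : ℝ) + lam + 1 / 2) + 1 by push_cast; ring,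
    show 2 * ((k + 1 : ℕ) : ℝ) + lam = p + 2 by push_cast; ring,
    show (k : ℝ) + (lam + 1) + 1 / 2 = ((k : ℝ) + lam + 1 / 2) + 1 by ring,
    show 2 * (k : ℝ) + (lam + 1) = p + 1 by ring, Real.Gamma_add_one (by linarith), ← hp]
  set I0 := ∫ y in Ioi (0 : ℝ), y ^ p * Real.exp (-y ^ 2) * g y
  set I2 := ∫ y in Ioi (0 : ℝ), y ^ (p + 2) * Real.exp (-y ^ 2) * g y
  set I1 := ∫ y in Ioi (0 : ℝ), y ^ (p + 1) * Real.exp (-y ^ 2) * g' y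
  set J := ∫ y in Ioi (0 : ℝ), y ^ (p + 1) * Real.exp (-y ^ 2)
  set q := (k : ℝ) + lam + 1 / 2 with hq
  have hq0 : 0 < q := by linarith
  have e : 2 / (q * Real.Gamma q) * I2 - 2 / Real.Gamma q * I0 = (I1 - lam * I0) / (q * Real.Gamma q) := by
    have : I1 - lam * I0 = 2 * I2 - 2 * q * I0 := by
      have : p + 1 = 2 * q - lam := by rw [hp, hq]; ring
      rw [this] at hibp
      linarith
    rw [this]
    field_simp
  rw [e, abs_div, abs_of_pos (by positivity : 0 < q * Real.Gamma q), div_le_iff₀ (by positivity)]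
  calc _ ≤ |I1| + lam * |I0| := by
        calc _ ≤ |I1| + |lam * I0| := abs_sub _ _
          _ = _ := by rw [abs_mul, abs_of_pos (by linarith : 0 < lam)]
    _ ≤ L * J + lam * (L * J) := add_le_add b2 (mul_le_mul_of_nonneg_left b1 (by linarith))
    _ = _ := by field_simp

lemma integral_dirichletKernel_mul_id {x : ℝ} (hx : 0 < x) :
    ∫ y in Ioi (0 : ℝ), dirichletKernel x y * y = x := by
  have h := integral_scaledKernel_mul_rpow le_rfl hx
  rw [Real.rpow_one] at h
  refine Eq.trans (setIntegral_congr_fun measurableSet_Ioi fun y hy => ?_) h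
  simp only [Real.rpow_one, scaledKernel_one hx hy]

lemma integrableOn_dirichletKernel_mul_id {x : ℝ} (hx : 0 < x) :
    IntegrableOn (fun y => dirichletKernel x y * y) (Ioi 0) := by
  refine (integrableOn_scaledKernel_mul_rpow le_rfl hx).congr_fun (fun y hy => ?_) measurableSet_Ioi
  simp only [Real.rpow_one, scaledKernel_one hx hy]

lemma exists_integral_scaledKernel_mul_le_of_le_id {lam : ℝ} (hlam : 1 ≤ lam) :
    ∃ C : ℝ, 0 < C ∧ ∀ (L : ℝ) (g : ℝ → ℝ) (x : ℝ), 0 ≤ L → 0 < x →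
      (∀ y, 0 < y → |g y| ≤ L * y) →
      |∫ y in Ioi (0 : ℝ), scaledKernel lam x y * g y| ≤ C * L * x := by
  obtain ⟨C, hC, hdom⟩ := exists_scaledKernel_le hlam
  refine ⟨C, by linarith, fun L g x hL hx hg => ?_⟩
  calc _ ≤ ∫ y in Ioi (0 : ℝ), C * L * (dirichletKernel x y * y) := by
        rw [← Real.norm_eq_abs]
        refine norm_integral_le_of_norm_le ((integrableOn_dirichletKernel_mul_id hx).const_mul _) ?_
        filter_upwards [ae_restrict_mem measurableSet_Ioi] with y hy
        have h0 := scaledKernel_nonneg hlam hx hy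
        rw [norm_mul, Real.norm_eq_abs, Real.norm_eq_abs, abs_of_nonneg h0]
        calc _ ≤ (C * dirichletKernel x y) * (L * y) :=
              mul_le_mul (hdom x y hx hy) (hg y hy) (abs_nonneg _)
                (mul_nonneg (by linarith) (dirichletKernel_nonneg hx hy))
          _ = _ := by ring
    _ = _ := by rw [integral_const_mul, integral_dirichletKernel_mul_id hx]

/-- The heat operator at time `1/4` maps Lipschitz functions vanishing at the origin to Lipschitz
functions. -/
lemma exists_lipschitz_scaledKernel {lam : ℝ} (hlam : 1 ≤ lam) :
    ∃ C : ℝ, 0 < C ∧ ∀ (L : ℝ) (g g' : ℝ → ℝ), 0 ≤ L →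
      (∀ y, 0 < y → HasDerivAt g (g' y) y) →
      AEStronglyMeasurable g (volume.restrict (Ioi 0)) →
      AEStronglyMeasurable g' (volume.restrict (Ioi 0)) →
      (∀ y, 0 < y → |g y| ≤ L * y) → (∀ y, 0 < y → |g' y| ≤ L) →
      ∀ x₁ x₂ : ℝ, 0 < x₁ → 0 < x₂ →
      |(∫ y in Ioi (0 : ℝ), scaledKernel lam x₁ y * g y) -
        ∫ y in Ioi (0 : ℝ), scaledKernel lam x₂ y * g y| ≤ C * L * |x₁ - x₂| := by
  obtain ⟨C₁, hC₁, h₁⟩ := exists_integral_scaledKernel_mul_le_of_le_id hlam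
  obtain ⟨C₂, hC₂, h₂⟩ := exists_integral_scaledKernel_mul_le (show 1 ≤ lam + 1 by linarith)
  refine ⟨lam * C₁ + (1 + lam) * C₂, by positivity, ?_⟩
  intro L g g' hL hderiv hm hm' hg hg' x₁ x₂ hx₁ hx₂
  have hgl : ∀ y, 0 < y → |g y| ≤ L * (1 + y ^ lam) := fun y hy => by
    refine (hg y hy).trans (mul_le_mul_of_nonneg_left ?_ hL)
    rcases le_total y 1 with h | h
    · have : 0 < y ^ lam := by positivity
      linarith
    · have := Real.rpow_le_rpow_of_exponent_le h hlam
      rw [Real.rpow_one] at this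
      linarith
  set a := momentCoeff lam g with ha
  set B := L * (1 + Real.Gamma (lam / 2 + 1 / 2) / Real.Gamma (lam + 1 / 2)) with hB
  have hab : ∀ k, |a k| ≤ B := abs_momentCoeff_le hlam hL hm hgl
  set T : ℝ → ℝ := fun x => ∫ y in Ioi (0 : ℝ), scaledKernel lam x y * g y with hT
  set F : ℝ → ℝ := fun X => ∑' k, a k * (X ^ k / (Nat.factorial k : ℝ)) with hF
  set F' : ℝ → ℝ := fun X => ∑' k, a (k + 1) * (X ^ k / (Nat.factorial k : ℝ)) with hF'
  have hsum : ∀ (b : ℕ → ℝ) (X : ℝ), (∀ k, |b k| ≤ B) →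
      Summable fun k => b k * (X ^ k / (Nat.factorial k : ℝ)) := fun b X hb => by
    refine Summable.of_norm_bounded ((Real.summable_pow_div_factorial |X|).mul_left B) fun k => ?_
    rw [norm_mul, Real.norm_eq_abs, Real.norm_eq_abs, abs_div, abs_pow, Nat.abs_cast]
    exact mul_le_mul_of_nonneg_right (hb k) (by positivity)
  have hTF : ∀ x, 0 < x → T x = x ^ lam * Real.exp (-x ^ 2) * F (x ^ 2) := fun x hx => by
    have h := (hasSum_momentCoeff hlam hL hm hgl hx).tsum_eq
    rw [tsum_mul_left] at h
    exact h.symm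
  set T' : ℝ → ℝ := fun x => lam / x * T x +
    2 * x * (x ^ lam * Real.exp (-x ^ 2)) * (F' (x ^ 2) - F (x ^ 2)) with hT'
  have hTd : ∀ x ∈ Ioi (0 : ℝ), HasDerivWithinAt T (T' x) (Ioi 0) x := fun x hx => by
    have hx' : 0 < x := hx
    have d1 := Real.hasDerivAt_rpow_const (x := x) (p := lam) (Or.inl hx'.ne')
    have d2 : HasDerivAt (fun y : ℝ => Real.exp (-y ^ 2)) (Real.exp (-x ^ 2) * (-(2 * x))) x := by
      simpa using ((hasDerivAt_pow 2 x).neg).exp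
    have d3 : HasDerivAt (fun y : ℝ => F (y ^ 2)) (F' (x ^ 2) * (2 * x)) x := by
      have := (hasDerivAt_tsum_pow_div_factorial hab (x ^ 2)).comp x (hasDerivAt_pow 2 x)
      refine this.congr_deriv ?_
      simp [hF']
    have d := ((d1.mul d2).mul d3).hasDerivWithinAt (s := Ioi 0)
    refine (d.congr (fun y hy => ?_) ?_).congr_deriv ?_
    · exact hTF y hy
    · exact hTF x hx
    · simp only [hT', hTF x hx', Pi.mul_apply]
      rw [Real.rpow_sub_one hx'.ne']
      ring
  have hTb : ∀ x ∈ Ioi (0 : ℝ), ‖T' x‖ ≤ (lam * C₁ + (1 + lam) * C₂) * L := fun x hx => by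
    have hx' : 0 < x := hx
    have b1 : |lam / x * T x| ≤ lam * C₁ * L := by
      rw [abs_mul, abs_of_pos (by positivity : 0 < lam / x)]
      calc _ ≤ lam / x * (C₁ * L * x) := mul_le_mul_of_nonneg_left (h₁ L g x hL hx' hg) (by positivity)
        _ = _ := by field_simp
    have hm1 : AEStronglyMeasurable (fun _ : ℝ => (1 : ℝ)) (volume.restrict (Ioi 0)) :=
      aestronglyMeasurable_const
    have hs1 := hasSum_momentCoeff (lam := lam + 1) (A := 1) (g := fun _ => 1) (by linarith)
      zero_le_one hm1 (fun y hy => by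
        have : 0 < y ^ (lam + 1) := by positivity
        rw [abs_one]; linarith) hx'
    have hone := h₂ 1 (fun _ => 1) x hx' (fun y _ => by
      rw [abs_one, one_mul]; exact Real.one_le_exp (by positivity))
    have hFF : |F' (x ^ 2) - F (x ^ 2)| ≤ (1 + lam) * L / 2 *
        ∑' k, momentCoeff (lam + 1) (fun _ => 1) k * ((x ^ 2) ^ k / (Nat.factorial k : ℝ)) := by
      have hsa := hsum a (x ^ 2) hab
      have hsa' := hsum (fun k => a (k + 1)) (x ^ 2) fun k => hab (k + 1)
      simp only [hF, hF']
      rw [← hsa'.tsum_sub hsa, ← tsum_mul_left, ← Real.norm_eq_abs]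
      refine tsum_of_norm_bounded (Summable.hasSum ?_) fun k => ?_
      · have hne : x ^ (lam + 1) * Real.exp (-x ^ 2) ≠ 0 := by positivity
        exact ((summable_mul_left_iff hne).1 hs1.summable).mul_left _
      · rw [← sub_mul, norm_mul, Real.norm_eq_abs, Real.norm_eq_abs,
          abs_of_nonneg (by positivity : 0 ≤ (x ^ 2) ^ k / (Nat.factorial k : ℝ)), ← mul_assoc]
        exact mul_le_mul_of_nonneg_right
          (abs_momentCoeff_succ_sub_le hlam hderiv hm hm' hL hg hg' k) (by positivity)
    have b2 : |2 * x * (x ^ lam * Real.exp (-x ^ 2)) * (F' (x ^ 2) - F (x ^ 2))| ≤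
        (1 + lam) * C₂ * L := by
      have hs1' := hs1.tsum_eq
      rw [tsum_mul_left, Real.rpow_add_one hx'.ne'] at hs1'
      rw [abs_mul, abs_of_nonneg (by positivity : 0 ≤ 2 * x * (x ^ lam * Real.exp (-x ^ 2)))]
      calc _ ≤ _ := mul_le_mul_of_nonneg_left hFF (by positivity)
        _ = (1 + lam) * L * ∫ y in Ioi (0 : ℝ), scaledKernel (lam + 1) x y * 1 := by
            rw [← hs1']; ring
        _ ≤ (1 + lam) * L * (C₂ * 1) :=
            mul_le_mul_of_nonneg_left ((le_abs_self _).trans hone) (by positivity)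
        _ = _ := by ring
    rw [Real.norm_eq_abs]
    calc _ ≤ _ := abs_add_le _ _
      _ ≤ _ := add_le_add b1 b2
      _ = _ := by ring
  have h := (convex_Ioi (0 : ℝ)).norm_image_sub_le_of_norm_hasDerivWithin_le hTd hTb hx₂ hx₁
  simpa only [Real.norm_eq_abs] using h

/-- `u` vanishes on `(-∞, 0]` and is `α`-Hölder on `ℝ` with constant `N`. -/
structure HalfLineHolder (α N : ℝ) (u : ℝ → ℝ) : Prop where
  abs_sub_le : ∀ x y, |u x - u y| ≤ N * |x - y| ^ α
  eq_zero : ∀ x, x ≤ 0 → u x = 0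

namespace HalfLineHolder

variable {α N : ℝ} {u : ℝ → ℝ}

lemma abs_le (hu : HalfLineHolder α N u) {y : ℝ} (hy : 0 ≤ y) : |u y| ≤ N * y ^ α := by
  have h := hu.abs_sub_le y 0
  rwa [hu.eq_zero 0 le_rfl, sub_zero, sub_zero, abs_of_nonneg hy] at h

lemma nonneg (hu : HalfLineHolder α N u) : 0 ≤ N := by
  have h := hu.abs_le zero_le_one
  rw [Real.one_rpow, mul_one] at h
  exact (abs_nonneg _).trans h

lemma abs (hu : HalfLineHolder α N u) : HalfLineHolder α N (fun y => |u y|) where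
  abs_sub_le x y := (abs_abs_sub_abs_le_abs_sub _ _).trans (hu.abs_sub_le x y)
  eq_zero x hx := by rw [hu.eq_zero x hx, abs_zero]

lemma comp_mul (hu : HalfLineHolder α N u) {h : ℝ} (hh : 0 < h) :
    HalfLineHolder α (N * h ^ α) (fun y => u (h * y)) where
  abs_sub_le x y := by
    refine (hu.abs_sub_le (h * x) (h * y)).trans_eq ?_
    rw [← mul_sub, abs_mul, abs_of_pos hh, Real.mul_rpow hh.le (abs_nonneg _), mul_assoc]
  eq_zero x hx := hu.eq_zero _ (mul_nonpos_of_nonneg_of_nonpos hh.le hx)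

lemma continuous (hu : HalfLineHolder α N u) (hα : 0 < α) : Continuous u := by
  rw [continuous_iff_continuousAt]
  intro x
  rw [ContinuousAt, tendsto_iff_dist_tendsto_zero]
  have h : Continuous fun y : ℝ => N * |y - x| ^ α :=
    continuous_const.mul ((continuous_id.sub continuous_const).abs.rpow_const fun _ => Or.inr hα.le)
  have h0 : Tendsto (fun y : ℝ => N * |y - x| ^ α) (nhds x) (nhds 0) := by
    have := h.tendsto x
    simpa [Real.zero_rpow hα.ne'] using this
  exact squeeze_zero (fun _ => dist_nonneg) (fun y => hu.abs_sub_le y x) h0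

lemma abs_le_mul_exp (hu : HalfLineHolder α N u) (hα : 0 < α) (hα1 : α < 1) {x y : ℝ}
    (hx : 0 < x) (hy : 0 < y) : |u y| ≤ N * (2 + x) * Real.exp ((x - y) ^ 2 / 2) := by
  have hpow : y ^ α ≤ 1 + y := by
    rcases le_total y 1 with h | h
    · exact (Real.rpow_le_one hy.le h hα.le).trans (by linarith)
    · exact (Real.rpow_le_rpow_of_exponent_le h hα1.le).trans (by rw [Real.rpow_one]; linarith)
  have hexp := Real.add_one_le_exp ((x - y) ^ 2 / 2)
  have h2 : 1 + y ≤ (2 + x) * Real.exp ((x - y) ^ 2 / 2) := by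
    have := mul_le_mul_of_nonneg_left hexp (show 0 ≤ 2 + x by linarith)
    nlinarith [sq_nonneg (x - y + 1), mul_nonneg hx.le (sq_nonneg (x - y))]
  calc |u y| ≤ N * y ^ α := hu.abs_le hy.le
    _ ≤ N * ((2 + x) * Real.exp ((x - y) ^ 2 / 2)) :=
        mul_le_mul_of_nonneg_left (hpow.trans h2) hu.nonneg
    _ = _ := by ring

lemma integrableOn_scaledKernel_mul (hu : HalfLineHolder α N u) (hα : 0 < α) (hα1 : α < 1)
    {lam x : ℝ} (hlam : 1 ≤ lam) (hx : 0 < x) :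
    IntegrableOn (fun y => scaledKernel lam x y * u y) (Ioi 0) :=
  _root_.integrableOn_scaledKernel_mul hlam hx (hu.continuous hα).aestronglyMeasurable
    fun _ hy => hu.abs_le_mul_exp hα hα1 hx hy

end HalfLineHolder

lemma exists_integral_scaledKernel_mul_le_rpow {lam α : ℝ} (hlam : 1 ≤ lam) (hα : 0 < α)
    (hα1 : α < 1) :
    ∃ C : ℝ, 0 < C ∧ ∀ N u, HalfLineHolder α N u → ∀ x, 0 < x →
      |∫ y in Ioi (0 : ℝ), scaledKernel lam x y * u y| ≤ C * N * x ^ α := by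
  obtain ⟨C₀, hC₀, h₀⟩ := exists_integral_scaledKernel_mul_le hlam
  obtain ⟨C₁, hC₁, h₁⟩ := exists_integral_scaledKernel_mul_le_of_le_id hlam
  refine ⟨C₀ + C₁, by positivity, fun N u hu x hx => ?_⟩
  have hN := hu.nonneg
  have hexp : ∀ y : ℝ, 1 ≤ Real.exp ((x - y) ^ 2 / 2) := fun y => Real.one_le_exp (by positivity)
  have hi₁ : IntegrableOn (fun y => scaledKernel lam x y * (N * x ^ (α - 1) * y)) (Ioi 0) := by
    refine _root_.integrableOn_scaledKernel_mul (A := N * x ^ (α - 1) * (2 + x)) hlam hx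
      (by fun_prop) fun y hy => ?_
    have h1 := Real.add_one_le_exp ((x - y) ^ 2 / 2)
    have h2 : y ≤ (2 + x) * Real.exp ((x - y) ^ 2 / 2) := by
      have := mul_le_mul_of_nonneg_left h1 (show 0 ≤ 2 + x by linarith)
      nlinarith [sq_nonneg (x - y + 1), mul_nonneg hx.le (sq_nonneg (x - y))]
    rw [abs_of_nonneg (by positivity), mul_assoc (N * x ^ (α - 1))]
    exact mul_le_mul_of_nonneg_left h2 (by positivity)
  have hi₀ : IntegrableOn (fun y => scaledKernel lam x y * (N * x ^ α)) (Ioi 0) := by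
    refine _root_.integrableOn_scaledKernel_mul (A := N * x ^ α) hlam hx
      aestronglyMeasurable_const fun y hy => ?_
    rw [abs_of_nonneg (by positivity)]
    exact le_mul_of_one_le_right (by positivity) (hexp y)
  have hb : |∫ y in Ioi (0 : ℝ), scaledKernel lam x y * u y| ≤
      (∫ y in Ioi (0 : ℝ), scaledKernel lam x y * (N * x ^ (α - 1) * y)) +
        ∫ y in Ioi (0 : ℝ), scaledKernel lam x y * (N * x ^ α) := by
    rw [← integral_add hi₁ hi₀, ← Real.norm_eq_abs]
    refine norm_integral_le_of_norm_le (hi₁.add hi₀) ?_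
    filter_upwards [ae_restrict_mem measurableSet_Ioi] with y hy
    have hy' : 0 < y := hy
    have hpow : y ^ α ≤ x ^ (α - 1) * y + x ^ α := by
      rcases le_total y x with h | h
      · have := Real.rpow_le_rpow hy'.le h hα.le
        have : 0 ≤ x ^ (α - 1) * y := by positivity
        linarith
      · have h3 : y ^ (α - 1) ≤ x ^ (α - 1) := Real.rpow_le_rpow_of_nonpos hx h (by linarith)
        have h4 : y ^ α = y ^ (α - 1) * y := by rw [Real.rpow_sub_one hy'.ne']; field_simp
        have : 0 ≤ x ^ α := by positivity
        nlinarith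
    have hk := scaledKernel_nonneg hlam hx hy'
    rw [norm_mul, Real.norm_eq_abs, Real.norm_eq_abs, abs_of_nonneg hk]
    show _ ≤ scaledKernel lam x y * (N * x ^ (α - 1) * y) + scaledKernel lam x y * (N * x ^ α)
    rw [← mul_add]
    refine mul_le_mul_of_nonneg_left ?_ hk
    calc |u y| ≤ N * y ^ α := hu.abs_le hy'.le
      _ ≤ N * (x ^ (α - 1) * y + x ^ α) := mul_le_mul_of_nonneg_left hpow hN
      _ = _ := by ring
  have e₁ := (le_abs_self _).trans (h₁ (N * x ^ (α - 1)) (fun y => N * x ^ (α - 1) * y) x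
    (by positivity) hx fun y hy => by rw [abs_of_nonneg (by positivity)])
  have e₀ := (le_abs_self _).trans (h₀ (N * x ^ α) (fun _ => N * x ^ α) x hx fun y _ => by
    rw [abs_of_nonneg (by positivity)]
    exact le_mul_of_one_le_right (by positivity) (hexp y))
  have hx1 : x ^ α = x ^ (α - 1) * x := by rw [Real.rpow_sub_one hx.ne']; field_simp
  calc _ ≤ C₁ * (N * x ^ (α - 1)) * x + C₀ * (N * x ^ α) := by linarith
    _ = _ := by rw [hx1]; ring

lemma abs_rpow_sub_one_le {lam r : ℝ} (hlam : 1 ≤ lam) (hr : 0 < r) {n : ℕ} (hn : lam - 1 ≤ n) :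
    |r ^ lam - 1| ≤ lam * |r - 1| * (1 + |r - 1|) ^ n := by
  have hbase : (1 : ℝ) ≤ 1 + |r - 1| := by linarith [abs_nonneg (r - 1)]
  rcases le_total r 1 with h | h
  · have hb := one_add_mul_self_le_rpow_one_add (show -1 ≤ r - 1 by linarith) hlam
    rw [add_sub_cancel] at hb
    have h1 : r ^ lam ≤ 1 := Real.rpow_le_one hr.le h (by linarith)
    have h2 : lam * |r - 1| * 1 ≤ lam * |r - 1| * (1 + |r - 1|) ^ n :=
      mul_le_mul_of_nonneg_left (one_le_pow₀ hbase) (by positivity)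
    rw [abs_of_nonpos (by linarith)]
    rw [abs_of_nonpos (show r - 1 ≤ 0 by linarith)] at h2 ⊢
    linarith
  · have hb := one_add_mul_self_le_rpow_one_add (s := r⁻¹ - 1)
      (by have := inv_pos.2 hr; linarith) hlam
    rw [add_sub_cancel, Real.inv_rpow hr.le] at hb
    have hrl : 0 < r ^ lam := by positivity
    have h1 : r ^ lam - 1 ≤ lam * (r - 1) * r ^ (lam - 1) := by
      have h2 := mul_le_mul_of_nonneg_right hb hrl.le
      rw [inv_mul_cancel₀ hrl.ne'] at h2
      have h3 : r ^ (lam - 1) = r ^ lam * r⁻¹ := by rw [Real.rpow_sub_one hr.ne']; rfl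
      have h4 : lam * (r - 1) * r ^ (lam - 1) = lam * r ^ lam * (1 - r⁻¹) := by
        rw [h3]; field_simp
      rw [h4]
      nlinarith
    have h5 : r ^ (lam - 1) ≤ (1 + |r - 1|) ^ n := by
      rw [abs_of_nonneg (by linarith), add_sub_cancel, ← Real.rpow_natCast]
      exact Real.rpow_le_rpow_of_exponent_le h hn
    have h6 : 1 ≤ r ^ lam := Real.one_le_rpow h (by linarith)
    rw [abs_of_nonneg (by linarith)]
    refine h1.trans ?_
    rw [abs_of_nonneg (show 0 ≤ r - 1 by linarith)] at h5 ⊢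
    exact mul_le_mul_of_nonneg_left h5 (mul_nonneg (by linarith) (by linarith))

lemma one_add_abs_pow_le_exp (m : ℕ) (q : ℝ) :
    (1 + |q|) ^ m ≤ (Nat.factorial m : ℝ) * Real.exp (3 / 2) * Real.exp (q ^ 2 / 2) := by
  have h := Real.pow_div_factorial_le_exp (1 + |q|) (by positivity) m
  rw [div_le_iff₀ (by positivity)] at h
  refine h.trans ?_
  rw [mul_assoc, ← Real.exp_add, mul_comm]
  refine mul_le_mul_of_nonneg_left (Real.exp_le_exp.2 ?_) (by positivity)
  nlinarith [sq_nonneg (|q| - 1), sq_abs q]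

lemma exists_integral_scaledKernel_mul_sub_le {lam α : ℝ} (hlam : 1 ≤ lam) (hα : 0 < α)
    (hα1 : α < 1) :
    ∃ C : ℝ, 0 < C ∧ ∀ N u, HalfLineHolder α N u → ∀ x, 0 < x →
      |(∫ y in Ioi (0 : ℝ), scaledKernel lam x y * u y) - u x| ≤ C * N := by
  obtain ⟨C₀, hC₀, h₀⟩ := exists_integral_scaledKernel_mul_le hlam
  obtain ⟨C₁, hC₁, h₁⟩ := exists_integral_scaledKernel_mul_le_rpow hlam hα hα1
  obtain ⟨n, hn⟩ := exists_nat_ge (lam - 1)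
  set M : ℝ := (1 + lam) * ((Nat.factorial (n + 1) : ℝ) * Real.exp (3 / 2)) with hM
  have hM0 : 0 < M := by positivity
  refine ⟨C₀ * M + (C₁ + 1), by positivity, fun N u hu x hx => ?_⟩
  have hN := hu.nonneg
  rcases le_total x 1 with hx1 | hx1
  · have hxα : x ^ α ≤ 1 := Real.rpow_le_one hx.le hx1 hα.le
    have e1 := h₁ N u hu x hx
    have e2 := hu.abs_le hx.le
    have e3 := abs_sub (∫ y in Ioi (0 : ℝ), scaledKernel lam x y * u y) (u x)
    have e4 : C₁ * N * x ^ α ≤ C₁ * N := mul_le_of_le_one_right (by positivity) hxα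
    have e5 : N * x ^ α ≤ N := mul_le_of_le_one_right hN hxα
    have e6 : 0 ≤ C₀ * M * N := by positivity
    nlinarith
  · have hxl : 0 < x ^ lam := by positivity
    have hint := integral_scaledKernel_mul_rpow hlam hx
    have hi := integrableOn_scaledKernel_mul_rpow hlam hx
    have heq : (∫ y in Ioi (0 : ℝ), scaledKernel lam x y * u y) - u x =
        ∫ y in Ioi (0 : ℝ), scaledKernel lam x y * (u y - u x / x ^ lam * y ^ lam) := by
      have h2 : u x = ∫ y in Ioi (0 : ℝ), u x / x ^ lam * (scaledKernel lam x y * y ^ lam) := by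
        rw [integral_const_mul, hint]; field_simp
      conv_lhs => rw [h2]
      rw [← integral_sub (hu.integrableOn_scaledKernel_mul hα hα1 hlam hx) (hi.const_mul _)]
      refine integral_congr_ae (Eventually.of_forall fun y => ?_)
      show _ = _
      ring
    rw [heq]
    have hmain := h₀ (M * N) (fun y => u y - u x / x ^ lam * y ^ lam) x hx fun y hy => ?_
    · refine hmain.trans ?_
      have : 0 ≤ (C₁ + 1) * N := by positivity
      linarith
    set q := x - y with hq
    have hq0 := abs_nonneg q
    set r := y / x with hr
    have hr0 : 0 < r := div_pos hy hx
    have hrq : |r - 1| = |q| / x := by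
      rw [hr, hq, show y / x - 1 = -((x - y) / x) by field_simp; ring, abs_neg, abs_div,
        abs_of_pos hx]
    have hrq' : |r - 1| ≤ |q| := by rw [hrq]; exact div_le_self hq0 hx1
    have hsplit : u y - u x / x ^ lam * y ^ lam = (u y - u x) - u x * (r ^ lam - 1) := by
      rw [hr, Real.div_rpow hy.le hx.le]; field_simp; ring
    have b1 : |u y - u x| ≤ N * (1 + |q|) ^ (n + 1) := by
      refine (hu.abs_sub_le y x).trans (mul_le_mul_of_nonneg_left ?_ hN)
      rw [abs_sub_comm, ← hq]
      calc |q| ^ α ≤ (1 + |q|) ^ α := Real.rpow_le_rpow hq0 (by linarith) hα.le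
        _ ≤ (1 + |q|) ^ ((n + 1 : ℕ) : ℝ) :=
          Real.rpow_le_rpow_of_exponent_le (by linarith)
            (by push_cast; linarith [n.cast_nonneg (α := ℝ)])
        _ = _ := Real.rpow_natCast _ _
    have b2 : |u x * (r ^ lam - 1)| ≤ lam * N * (1 + |q|) ^ (n + 1) := by
      have c1 := abs_rpow_sub_one_le hlam hr0 hn
      have c2 : x ^ α * |r - 1| ≤ |q| := by
        rw [hrq]
        have : x ^ α ≤ x := by simpa using Real.rpow_le_rpow_of_exponent_le hx1 hα1.le
        rw [mul_div_assoc', div_le_iff₀ hx, mul_comm]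
        exact mul_le_mul_of_nonneg_left this hq0
      rw [abs_mul]
      calc |u x| * |r ^ lam - 1|
          ≤ (N * x ^ α) * (lam * |r - 1| * (1 + |r - 1|) ^ n) :=
            mul_le_mul (hu.abs_le hx.le) c1 (abs_nonneg _) (by positivity)
        _ = lam * N * ((x ^ α * |r - 1|) * (1 + |r - 1|) ^ n) := by ring
        _ ≤ lam * N * ((1 + |q|) * (1 + |q|) ^ n) := by
            refine mul_le_mul_of_nonneg_left ?_ (by positivity)
            refine mul_le_mul (by linarith) ?_ (by positivity) (by positivity)
            exact pow_le_pow_left₀ (by positivity) (by linarith) n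
        _ = _ := by ring
    rw [hsplit]
    have b3 := abs_sub (u y - u x) (u x * (r ^ lam - 1))
    have b4 := mul_le_mul_of_nonneg_left (one_add_abs_pow_le_exp (n + 1) q)
      (show 0 ≤ (1 + lam) * N by positivity)
    calc _ ≤ (1 + lam) * N * (1 + |q|) ^ (n + 1) := by linarith
      _ ≤ _ := b4
      _ = _ := by rw [hM]; ring

lemma exists_holder_scaledKernel {lam α : ℝ} (hlam : 1 ≤ lam) (hα : 0 < α) (hα1 : α < 1) :
    ∃ C : ℝ, 0 < C ∧ ∀ N u, HalfLineHolder α N u → ∀ x₁ x₂, 0 < x₁ → 0 < x₂ →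
      |(∫ y in Ioi (0 : ℝ), scaledKernel lam x₁ y * u y) -
        ∫ y in Ioi (0 : ℝ), scaledKernel lam x₂ y * u y| ≤ C * N * |x₁ - x₂| ^ α := by
  obtain ⟨C₀, hC₀, h₀⟩ := exists_integral_scaledKernel_mul_le hlam
  obtain ⟨C₁, hC₁, h₁⟩ := exists_lipschitz_scaledKernel hlam
  refine ⟨C₁ + 4 * C₀, by positivity, fun N u hu x₁ x₂ hx₁ hx₂ => ?_⟩
  have hN := hu.nonneg
  rcases eq_or_ne x₁ x₂ with rfl | hne
  · simp [Real.zero_rpow hα.ne']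
  set d := |x₁ - x₂| with hd
  have hd0 : 0 < d := abs_pos.2 (sub_ne_zero.2 hne)
  have hc := hu.continuous hα
  have hc' : Continuous fun t => u (t + d) - u t := by fun_prop
  set g : ℝ → ℝ := fun y => d⁻¹ * ∫ t in (0 : ℝ)..y, (u (t + d) - u t) with hg
  have hder : ∀ y, HasDerivAt g (d⁻¹ * (u (y + d) - u y)) y := fun y =>
    (hc'.integral_hasStrictDerivAt 0 y).hasDerivAt.const_mul _
  have hgc : Continuous g := continuous_iff_continuousAt.2 fun y => (hder y).continuousAt
  set L := N * d ^ (α - 1) with hL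
  have hL0 : 0 ≤ L := by positivity
  have hLd : L * d = N * d ^ α := by rw [hL, Real.rpow_sub_one hd0.ne']; field_simp
  have hinc : ∀ t, |u (t + d) - u t| ≤ N * d ^ α := fun t => by
    have := hu.abs_sub_le (t + d) t
    rwa [add_sub_cancel_left, abs_of_pos hd0] at this
  have hg' : ∀ y, |d⁻¹ * (u (y + d) - u y)| ≤ L := fun y => by
    rw [abs_mul, abs_of_pos (inv_pos.2 hd0), inv_mul_le_iff₀ hd0, mul_comm d, hLd]
    exact hinc y
  have hgb : ∀ y, 0 < y → |g y| ≤ L * y := fun y hy => by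
    have h2 := intervalIntegral.norm_integral_le_of_norm_le_const (a := 0) (b := y)
      (f := fun t => u (t + d) - u t) (C := N * d ^ α) fun t _ => hinc t
    rw [sub_zero, abs_of_pos hy, Real.norm_eq_abs, ← hLd] at h2
    rw [hg]
    simp only
    rw [abs_mul, abs_of_pos (inv_pos.2 hd0), inv_mul_le_iff₀ hd0]
    linarith
  have hii : ∀ a b : ℝ, IntervalIntegrable u volume a b := fun a b => hc.intervalIntegrable a b
  have hgeq : ∀ y, g y = d⁻¹ * ((∫ t in y..(y + d), u t) - ∫ t in (0 : ℝ)..d, u t) := fun y => by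
    rw [hg]
    simp only
    rw [intervalIntegral.integral_sub
      ((show Continuous fun t => u (t + d) by fun_prop).intervalIntegrable _ _) (hii _ _),
      intervalIntegral.integral_comp_add_right (fun t => u t), zero_add]
    have e1 := intervalIntegral.integral_add_adjacent_intervals (hii 0 y) (hii y (y + d))
    have e2 := intervalIntegral.integral_add_adjacent_intervals (hii 0 d) (hii d (y + d))
    congr 1
    linarith
  have hb : ∀ y, |u y - g y| ≤ 2 * (N * d ^ α) := fun y => by
    have k1 : |(∫ t in y..(y + d), u t) - d * u y| ≤ N * d ^ α * d := by
      have e : (∫ t in y..(y + d), u t) - d * u y = ∫ t in y..(y + d), (u t - u y) := by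
        rw [intervalIntegral.integral_sub (hii _ _) intervalIntegrable_const]
        simp
      rw [e]
      have := intervalIntegral.norm_integral_le_of_norm_le_const (a := y) (b := y + d)
        (f := fun t => u t - u y) (C := N * d ^ α) fun t ht => by
          rw [uIoc_of_le (by linarith)] at ht
          refine (hu.abs_sub_le t y).trans (mul_le_mul_of_nonneg_left ?_ hN)
          refine Real.rpow_le_rpow (abs_nonneg _) ?_ hα.le
          rw [abs_of_nonneg (by linarith [ht.1])]
          linarith [ht.2]
      rwa [add_sub_cancel_left, abs_of_pos hd0] at this
    have k2 : |∫ t in (0 : ℝ)..d, u t| ≤ N * d ^ α * d := by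
      have := intervalIntegral.norm_integral_le_of_norm_le_const (a := 0) (b := d)
        (f := u) (C := N * d ^ α) fun t ht => by
          rw [uIoc_of_le hd0.le] at ht
          refine (hu.abs_le ht.1.le).trans (mul_le_mul_of_nonneg_left ?_ hN)
          exact Real.rpow_le_rpow ht.1.le ht.2 hα.le
      rwa [sub_zero, abs_of_pos hd0] at this
    have k3 : u y - g y =
        d⁻¹ * (-((∫ t in y..(y + d), u t) - d * u y) + ∫ t in (0 : ℝ)..d, u t) := by
      rw [hgeq y]; field_simp; ring
    rw [k3, abs_mul, abs_of_pos (inv_pos.2 hd0), inv_mul_le_iff₀ hd0]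
    refine (abs_add_le _ _).trans ?_
    rw [abs_neg]
    linarith
  have hbe : ∀ x y : ℝ, |u y - g y| ≤ 2 * (N * d ^ α) * Real.exp ((x - y) ^ 2 / 2) := fun x y =>
    (hb y).trans (le_mul_of_one_le_right (by positivity) (Real.one_le_exp (by positivity)))
  have hsplit : ∀ x, 0 < x → (∫ y in Ioi (0 : ℝ), scaledKernel lam x y * u y) =
      (∫ y in Ioi (0 : ℝ), scaledKernel lam x y * g y) +
        ∫ y in Ioi (0 : ℝ), scaledKernel lam x y * (u y - g y) := fun x hx => by
    have i1 := hu.integrableOn_scaledKernel_mul hα hα1 hlam hx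
    have i2 : IntegrableOn (fun y => scaledKernel lam x y * (u y - g y)) (Ioi 0) :=
      integrableOn_scaledKernel_mul hlam hx (hc.sub hgc).aestronglyMeasurable fun y _ => hbe x y
    have i3 : IntegrableOn (fun y => scaledKernel lam x y * g y) (Ioi 0) := by
      refine (i1.sub i2).congr (Eventually.of_forall fun y => ?_)
      show scaledKernel lam x y * u y - scaledKernel lam x y * (u y - g y) = _
      ring
    rw [← integral_add i3 i2]
    refine integral_congr_ae (Eventually.of_forall fun y => ?_)
    show _ = _
    ring
  rw [hsplit x₁ hx₁, hsplit x₂ hx₂]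
  have f1 := h₁ L g _ hL0 (fun y _ => hder y) hgc.aestronglyMeasurable
    (continuous_const.mul hc').aestronglyMeasurable hgb (fun y _ => hg' y) x₁ x₂ hx₁ hx₂
  have f2 := h₀ (2 * (N * d ^ α)) (fun y => u y - g y) x₁ hx₁ fun y _ => hbe x₁ y
  have f3 := h₀ (2 * (N * d ^ α)) (fun y => u y - g y) x₂ hx₂ fun y _ => hbe x₂ y
  rw [← hd, mul_assoc, hLd] at f1
  rw [add_sub_add_comm]
  refine (abs_add_le _ _).trans ?_
  have f4 := abs_sub (∫ y in Ioi (0 : ℝ), scaledKernel lam x₁ y * (u y - g y))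
    (∫ y in Ioi (0 : ℝ), scaledKernel lam x₂ y * (u y - g y))
  linarith

lemma besselHeatKernel_eq_scaledKernel {lam h x y : ℝ} (hh : 0 < h) (hx : 0 < x) (hy : 0 < y) :
    besselHeatKernel lam (h ^ 2 / 4) x y = h⁻¹ * scaledKernel lam (x / h) (y / h) := by
  unfold besselHeatKernel besselI scaledKernel
  rw [← tsum_mul_left, ← tsum_mul_left, ← tsum_mul_right]
  refine tsum_congr fun k => ?_
  unfold scaledTerm
  have hw : 0 < x / h * (y / h) := by positivity
  set w := x / h * (y / h) with hwd
  have hz : x * y / (2 * (h ^ 2 / 4)) / 2 = w := by rw [hwd]; field_simp; ring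
  have hsq : √(x * y) = h * w ^ ((1 : ℝ) / 2) := by
    rw [← Real.sqrt_eq_rpow, show x * y = h ^ 2 * w by rw [hwd]; field_simp,
      Real.sqrt_mul (by positivity), Real.sqrt_sq hh.le]
  have hpow : w ^ (2 * (k : ℝ) + lam) = w ^ ((1 : ℝ) / 2) * w ^ (2 * (k : ℝ) + (lam - 1 / 2)) := by
    rw [← Real.rpow_add hw]; congr 1; ring
  have hexp : -(x ^ 2 + y ^ 2) / (4 * (h ^ 2 / 4)) = -(x / h) ^ 2 - (y / h) ^ 2 := by
    field_simp; ring
  rw [hz, hsq, hpow, hexp, show (k : ℝ) + (lam - 1 / 2) + 1 = k + lam + 1 / 2 by ring]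
  field_simp
  ring

lemma eq_sq_two_mul_sqrt_div_four {s : ℝ} (hs : 0 < s) : s = (2 * √s) ^ 2 / 4 := by
  rw [mul_pow, Real.sq_sqrt hs.le]; ring

lemma besselHeatKernel_nonneg {lam s x y : ℝ} (hlam : 1 ≤ lam) (hs : 0 < s) (hx : 0 < x)
    (hy : 0 < y) : 0 ≤ besselHeatKernel lam s x y := by
  have hh : 0 < 2 * √s := by positivity
  rw [eq_sq_two_mul_sqrt_div_four hs, besselHeatKernel_eq_scaledKernel hh hx hy]
  exact mul_nonneg (by positivity) (scaledKernel_nonneg hlam (by positivity) (by positivity))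

lemma measurable_besselHeatKernel (lam x : ℝ) :
    Measurable (fun p : ℝ × ℝ => besselHeatKernel lam p.1 x p.2) := by
  unfold besselHeatKernel besselI
  refine Measurable.mul (Measurable.mul (by fun_prop) (Measurable.tsum fun k => ?_)) (by fun_prop)
  exact Measurable.div_const (Measurable.pow_const (by fun_prop) _) _

lemma heatSemigroup_eq {lam s x : ℝ} (hs : 0 < s) (hx : 0 < x) (u : ℝ → ℝ) :
    heatSemigroup lam u s x =
      ∫ y in Ioi (0 : ℝ), scaledKernel lam (x / (2 * √s)) y * u (2 * √s * y) := by
  have hh : 0 < 2 * √s := by positivity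
  have hc := integral_comp_mul_left_Ioi
    (fun y => scaledKernel lam (x / (2 * √s)) (y / (2 * √s)) * u y) 0 hh
  simp only [mul_div_cancel_left₀ _ hh.ne', mul_zero] at hc
  rw [hc, smul_eq_mul, ← integral_const_mul, heatSemigroup]
  refine setIntegral_congr_fun measurableSet_Ioi fun y hy => ?_
  conv_lhs => rw [eq_sq_two_mul_sqrt_div_four hs, besselHeatKernel_eq_scaledKernel hh hx hy]
  ring

lemma HalfLineHolder.integrableOn_besselHeatKernel_mul {α N : ℝ} {u : ℝ → ℝ}
    (hu : HalfLineHolder α N u) (hα : 0 < α) (hα1 : α < 1) {lam s x : ℝ} (hlam : 1 ≤ lam)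
    (hs : 0 < s) (hx : 0 < x) :
    IntegrableOn (fun y => besselHeatKernel lam s x y * u y) (Ioi 0) := by
  have hh : 0 < 2 * √s := by positivity
  have hi := (hu.comp_mul hh).integrableOn_scaledKernel_mul hα hα1 hlam
    (show 0 < x / (2 * √s) by positivity)
  have hc := integrableOn_Ioi_comp_mul_left_iff
    (fun y => scaledKernel lam (x / (2 * √s)) (y / (2 * √s)) * u y) 0 hh
  simp only [mul_div_cancel_left₀ _ hh.ne', mul_zero] at hc
  refine IntegrableOn.congr_fun ((hc.1 hi).const_mul (2 * √s)⁻¹) (fun y hy => ?_) measurableSet_Ioi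
  conv_rhs => rw [eq_sq_two_mul_sqrt_div_four hs, besselHeatKernel_eq_scaledKernel hh hx hy]
  ring

/-- Bounds for the Bessel heat semigroup on Hölder functions, uniform in time. -/
lemma exists_heatSemigroup_bounds {lam α : ℝ} (hlam : 1 ≤ lam) (hα : 0 < α) (hα1 : α < 1) :
    ∃ C : ℝ, 0 < C ∧ ∀ N u, HalfLineHolder α N u → ∀ s, 0 < s →
      (∀ x, 0 < x → |heatSemigroup lam u s x| ≤ C * N * x ^ α) ∧
      (∀ x, 0 < x → |heatSemigroup lam u s x - u x| ≤ C * N * (2 * √s) ^ α) ∧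
      ∀ x₁ x₂, 0 < x₁ → 0 < x₂ →
        |heatSemigroup lam u s x₁ - heatSemigroup lam u s x₂| ≤ C * N * |x₁ - x₂| ^ α := by
  obtain ⟨C₁, hC₁, h₁⟩ := exists_integral_scaledKernel_mul_le_rpow hlam hα hα1
  obtain ⟨C₂, hC₂, h₂⟩ := exists_integral_scaledKernel_mul_sub_le hlam hα hα1
  obtain ⟨C₃, hC₃, h₃⟩ := exists_holder_scaledKernel hlam hα hα1
  refine ⟨C₁ + C₂ + C₃, by positivity, fun N u hu s hs => ?_⟩
  have hN := hu.nonneg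
  have hh : 0 < 2 * √s := by positivity
  set h := 2 * √s with hhd
  have huh := hu.comp_mul hh
  refine ⟨fun x hx => ?_, fun x hx => ?_, fun x₁ x₂ hx₁ hx₂ => ?_⟩
  · rw [heatSemigroup_eq hs hx, ← hhd]
    have hb := h₁ _ _ huh (x / h) (by positivity)
    have he : h ^ α * (x / h) ^ α = x ^ α := by
      rw [← Real.mul_rpow hh.le (by positivity)]; congr 1; field_simp
    refine hb.trans ?_
    rw [show C₁ * (N * h ^ α) * (x / h) ^ α = C₁ * N * x ^ α by rw [← he]; ring]
    gcongr
    linarith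
  · rw [heatSemigroup_eq hs hx, ← hhd]
    have hb := h₂ _ _ huh (x / h) (by positivity)
    simp only [mul_div_cancel₀ x hh.ne'] at hb
    refine hb.trans ?_
    rw [← mul_assoc]
    gcongr
    linarith
  · rw [heatSemigroup_eq hs hx₁, heatSemigroup_eq hs hx₂, ← hhd]
    have hb := h₃ _ _ huh (x₁ / h) (x₂ / h) (by positivity) (by positivity)
    have he : h ^ α * |x₁ / h - x₂ / h| ^ α = |x₁ - x₂| ^ α := by
      rw [← Real.mul_rpow hh.le (by positivity), ← sub_div, abs_div, abs_of_pos hh]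
      congr 1; field_simp
    refine hb.trans ?_
    rw [show C₃ * (N * h ^ α) * |x₁ / h - x₂ / h| ^ α = C₃ * N * |x₁ - x₂| ^ α by rw [← he]; ring]
    gcongr
    linarith

/-- The density subordinating the Poisson semigroup to the heat semigroup. -/
def stableDensity (t s : ℝ) : ℝ :=
  t / (2 * √π) * (s ^ (-(3 : ℝ) / 2) * Real.exp (-t ^ 2 / (4 * s)))

lemma stableDensity_nonneg {t s : ℝ} (ht : 0 < t) (hs : 0 < s) : 0 ≤ stableDensity t s := by
  unfold stableDensity
  positivity

lemma measurable_stableDensity : Measurable (fun p : ℝ × ℝ => stableDensity p.1 p.2) := by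
  unfold stableDensity
  refine Measurable.mul (by fun_prop) (Measurable.mul (Measurable.pow_const (by fun_prop) _) ?_)
  fun_prop

lemma stableDensity_moment {a t : ℝ} (ha : a < 1 / 2) (ht : 0 < t) :
    IntegrableOn (fun s => stableDensity t s * s ^ a) (Ioi 0) ∧
      ∫ s in Ioi (0 : ℝ), stableDensity t s * s ^ a =
        t / (2 * √π) * ((1 / (t ^ 2 / 4)) ^ (1 / 2 - a) * Real.Gamma (1 / 2 - a)) := by
  have hb : 0 < 1 / 2 - a := by linarith
  have hr : 0 < t ^ 2 / 4 := by positivity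
  set g : ℝ → ℝ := fun w => w ^ (1 / 2 - a - 1) * Real.exp (-(t ^ 2 / 4 * w)) with hg
  have hgi : IntegrableOn g (Ioi 0) := by
    have := integrableOn_rpow_mul_exp_neg_mul_rpow (p := 1) (s := 1 / 2 - a - 1)
      (b := t ^ 2 / 4) (by linarith) one_pos hr
    refine this.congr_fun (fun w _ => ?_) measurableSet_Ioi
    simp [hg]
  have heq : EqOn (fun s => t / (2 * √π) * ((|(-1 : ℝ)| * s ^ ((-1 : ℝ) - 1)) • g (s ^ (-1 : ℝ))))
      (fun s => stableDensity t s * s ^ a) (Ioi 0) := by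
    intro s hs
    have hs' : 0 < s := hs
    have e1 : s ^ (-1 - 1 : ℝ) * (s ^ (-1 : ℝ)) ^ (1 / 2 - a - 1) = s ^ (-(3 : ℝ) / 2) * s ^ a := by
      rw [← Real.rpow_mul hs'.le, ← Real.rpow_add hs', ← Real.rpow_add hs']
      congr 1; ring
    have e2 : -(t ^ 2 / 4 * s ^ (-1 : ℝ)) = -t ^ 2 / (4 * s) := by
      rw [Real.rpow_neg_one]; field_simp
    simp only [hg, stableDensity, smul_eq_mul, abs_neg, abs_one, one_mul, e2]
    linear_combination (t / (2 * √π) * Real.exp (-t ^ 2 / (4 * s))) * e1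
  refine ⟨?_, ?_⟩
  · exact IntegrableOn.congr_fun
      (((integrableOn_Ioi_comp_rpow_iff g (show (-1 : ℝ) ≠ 0 by norm_num)).2 hgi).const_mul _) heq
      measurableSet_Ioi
  · rw [← setIntegral_congr_fun measurableSet_Ioi heq, integral_const_mul,
      integral_comp_rpow_Ioi g (by norm_num), hg, Real.integral_rpow_mul_exp_neg_mul_Ioi hb hr]

lemma integrableOn_stableDensity {t : ℝ} (ht : 0 < t) :
    IntegrableOn (stableDensity t) (Ioi 0) := by
  simpa using (stableDensity_moment (a := 0) (by norm_num) ht).1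

lemma integral_stableDensity {t : ℝ} (ht : 0 < t) :
    ∫ s in Ioi (0 : ℝ), stableDensity t s = 1 := by
  have h := (stableDensity_moment (a := 0) (by norm_num) ht).2
  simp only [Real.rpow_zero, mul_one, sub_zero] at h
  have hpi : 0 < √π := Real.sqrt_pos.2 Real.pi_pos
  rw [h, Real.Gamma_one_half_eq, ← Real.sqrt_eq_rpow,
    show 1 / (t ^ 2 / 4) = (2 / t) ^ 2 by field_simp; norm_num, Real.sqrt_sq (by positivity)]
  field_simp

lemma exists_integral_stableDensity_mul_rpow {α : ℝ} (hα1 : α < 1) :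
    ∃ C : ℝ, 0 < C ∧ ∀ t, 0 < t →
      IntegrableOn (fun s => stableDensity t s * (2 * √s) ^ α) (Ioi 0) ∧
        ∫ s in Ioi (0 : ℝ), stableDensity t s * (2 * √s) ^ α = C * t ^ α := by
  have hG : 0 < Real.Gamma (1 / 2 - α / 2) := Real.Gamma_pos_of_pos (by linarith)
  have hpi : 0 < √π := Real.sqrt_pos.2 Real.pi_pos
  refine ⟨Real.Gamma (1 / 2 - α / 2) / √π, by positivity, fun t ht => ?_⟩
  obtain ⟨hi, hv⟩ := stableDensity_moment (a := α / 2) (by linarith) ht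
  have heq : EqOn (fun s => 2 ^ α * (stableDensity t s * s ^ (α / 2)))
      (fun s => stableDensity t s * (2 * √s) ^ α) (Ioi 0) := by
    intro s hs
    have hs' : 0 < s := hs
    simp only
    rw [Real.mul_rpow (by norm_num) (by positivity), Real.sqrt_eq_rpow, ← Real.rpow_mul hs'.le,
      show 1 / 2 * α = α / 2 by ring]
    ring
  refine ⟨IntegrableOn.congr_fun (hi.const_mul _) heq measurableSet_Ioi, ?_⟩
  rw [← setIntegral_congr_fun measurableSet_Ioi heq, integral_const_mul, hv,
    show 1 / (t ^ 2 / 4) = (2 / t) ^ (2 : ℝ) by rw [Real.rpow_two]; field_simp; norm_num,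
    ← Real.rpow_mul (by positivity), show 2 * (1 / 2 - α / 2) = 1 - α by ring,
    Real.rpow_sub (by positivity), Real.rpow_one, Real.div_rpow (by norm_num) ht.le]
  have : (0 : ℝ) < 2 ^ α := by positivity
  have : 0 < t ^ α := by positivity
  field_simp

lemma besselPoissonKernel_eq (lam t x y : ℝ) :
    besselPoissonKernel lam t x y =
      ∫ s in Ioi (0 : ℝ), stableDensity t s * besselHeatKernel lam s x y := by
  rw [besselPoissonKernel, ← integral_const_mul]
  refine integral_congr_ae (Eventually.of_forall fun s => ?_)
  simp only [stableDensity]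
  ring

namespace HalfLineHolder

variable {α N : ℝ} {u : ℝ → ℝ}

lemma stronglyMeasurable_heatSemigroup (hu : HalfLineHolder α N u) (hα : 0 < α) (lam x : ℝ) :
    StronglyMeasurable (fun s => heatSemigroup lam u s x) := by
  unfold heatSemigroup
  refine StronglyMeasurable.integral_prod_right (f := fun s y => besselHeatKernel lam s x y * u y) ?_
  exact ((measurable_besselHeatKernel lam x).mul
    ((hu.continuous hα).measurable.comp measurable_snd)).stronglyMeasurable

lemma integrable_subordination (hu : HalfLineHolder α N u) (hα : 0 < α) (hα1 : α < 1) {lam t x : ℝ}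
    (hlam : 1 ≤ lam) (ht : 0 < t) (hx : 0 < x) :
    Integrable (fun p : ℝ × ℝ => stableDensity t p.1 * besselHeatKernel lam p.1 x p.2 * u p.2)
      ((volume.restrict (Ioi 0)).prod (volume.restrict (Ioi 0))) := by
  obtain ⟨C, hC, hb⟩ := exists_heatSemigroup_bounds hlam hα hα1
  have hm : Measurable fun s => stableDensity t s :=
    measurable_stableDensity.comp (measurable_prodMk_left (x := t))
  have hmeas : Measurable
      fun p : ℝ × ℝ => stableDensity t p.1 * besselHeatKernel lam p.1 x p.2 * u p.2 :=
    ((hm.comp measurable_fst).mul (measurable_besselHeatKernel lam x)).mul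
      ((hu.continuous hα).measurable.comp measurable_snd)
  rw [integrable_prod_iff hmeas.aestronglyMeasurable]
  refine ⟨?_, ?_⟩
  · filter_upwards [ae_restrict_mem measurableSet_Ioi] with s hs
    refine ((hu.integrableOn_besselHeatKernel_mul hα hα1 hlam hs hx).const_mul
      (stableDensity t s)).congr (Eventually.of_forall fun y => ?_)
    simp only
    ring
  · refine Integrable.mono' ((integrableOn_stableDensity ht).mul_const (C * N * x ^ α))
      (hmeas.norm.stronglyMeasurable.integral_prod_right
        (f := fun s y => ‖stableDensity t s * besselHeatKernel lam s x y * u y‖)).aestronglyMeasurable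
      ?_
    filter_upwards [ae_restrict_mem measurableSet_Ioi] with s hs
    have hs' : 0 < s := hs
    have he : ∫ y in Ioi (0 : ℝ), ‖stableDensity t s * besselHeatKernel lam s x y * u y‖ =
        stableDensity t s * heatSemigroup lam (fun y => |u y|) s x := by
      rw [heatSemigroup, ← integral_const_mul]
      refine setIntegral_congr_fun measurableSet_Ioi fun y hy => ?_
      simp only [norm_mul, Real.norm_eq_abs]
      rw [abs_of_nonneg (stableDensity_nonneg ht hs'),
        abs_of_nonneg (besselHeatKernel_nonneg hlam hs' hx hy)]
      ring
    rw [he, norm_mul, Real.norm_eq_abs, abs_of_nonneg (stableDensity_nonneg ht hs')]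
    exact mul_le_mul_of_nonneg_left ((hb N _ hu.abs s hs').1 x hx) (stableDensity_nonneg ht hs')

lemma integrableOn_besselPoissonKernel_mul (hu : HalfLineHolder α N u) (hα : 0 < α) (hα1 : α < 1)
    {lam t x : ℝ} (hlam : 1 ≤ lam) (ht : 0 < t) (hx : 0 < x) :
    IntegrableOn (fun y => besselPoissonKernel lam t x y * u y) (Ioi 0) := by
  refine (hu.integrable_subordination hα hα1 hlam ht hx).integral_prod_right.congr
    (Eventually.of_forall fun y => ?_)
  simp only
  rw [besselPoissonKernel_eq, integral_mul_const]

lemma poissonSemigroup_eq (hu : HalfLineHolder α N u) (hα : 0 < α) (hα1 : α < 1)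
    {lam t x : ℝ} (hlam : 1 ≤ lam) (ht : 0 < t) (hx : 0 < x) :
    poissonSemigroup lam u t x =
      ∫ s in Ioi (0 : ℝ), stableDensity t s * heatSemigroup lam u s x := by
  have h := integral_integral_swap
    (f := fun s y => stableDensity t s * besselHeatKernel lam s x y * u y)
    (hu.integrable_subordination hα hα1 hlam ht hx)
  simp only [mul_assoc (stableDensity t _), integral_const_mul] at h
  simp only [← mul_assoc, integral_mul_const] at h
  simp only [poissonSemigroup, besselPoissonKernel_eq, heatSemigroup]
  exact h.symm

lemma integrableOn_stableDensity_mul_heatSemigroup (hu : HalfLineHolder α N u) (hα : 0 < α)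
    (hα1 : α < 1) {lam t x : ℝ} (hlam : 1 ≤ lam) (ht : 0 < t) (hx : 0 < x) :
    IntegrableOn (fun s => stableDensity t s * heatSemigroup lam u s x) (Ioi 0) := by
  refine (hu.integrable_subordination hα hα1 hlam ht hx).integral_prod_left.congr
    (Eventually.of_forall fun s => ?_)
  simp only [mul_assoc, integral_const_mul, heatSemigroup]

lemma aestronglyMeasurable_poissonSemigroup (hu : HalfLineHolder α N u) (hα : 0 < α) (hα1 : α < 1)
    {lam x : ℝ} (hlam : 1 ≤ lam) (hx : 0 < x) :
    AEStronglyMeasurable (fun t => poissonSemigroup lam u t x) (volume.restrict (Ioi 0)) := by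
  have hm : StronglyMeasurable
      fun t => ∫ s in Ioi (0 : ℝ), stableDensity t s * heatSemigroup lam u s x := by
    refine StronglyMeasurable.integral_prod_right
      (f := fun t s => stableDensity t s * heatSemigroup lam u s x) ?_
    exact (measurable_stableDensity.mul
      ((hu.stronglyMeasurable_heatSemigroup hα lam x).measurable.comp
        measurable_snd)).stronglyMeasurable
  refine hm.aestronglyMeasurable.congr ?_
  filter_upwards [ae_restrict_mem measurableSet_Ioi] with t ht
  exact (hu.poissonSemigroup_eq hα hα1 hlam ht hx).symm

end HalfLineHolder

/-- Bounds for the Bessel–Poisson semigroup on Hölder functions. -/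
lemma exists_poissonSemigroup_bounds {lam α : ℝ} (hlam : 1 ≤ lam) (hα : 0 < α) (hα1 : α < 1) :
    ∃ C : ℝ, 0 < C ∧ ∀ N u, HalfLineHolder α N u → ∀ t, 0 < t →
      (∀ x, 0 < x → |poissonSemigroup lam u t x - u x| ≤ C * N * x ^ α) ∧
      (∀ x, 0 < x → |poissonSemigroup lam u t x - u x| ≤ C * N * t ^ α) ∧
      ∀ x₁ x₂, 0 < x₁ → 0 < x₂ →
        |(poissonSemigroup lam u t x₁ - u x₁) - (poissonSemigroup lam u t x₂ - u x₂)| ≤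
          C * N * |x₁ - x₂| ^ α := by
  obtain ⟨C₁, hC₁, h₁⟩ := exists_heatSemigroup_bounds hlam hα hα1
  obtain ⟨C₂, hC₂, h₂⟩ := exists_integral_stableDensity_mul_rpow hα1
  refine ⟨C₁ + 1 + C₁ * C₂, by positivity, fun N u hu t ht => ?_⟩
  have hN := hu.nonneg
  have hρ := integrableOn_stableDensity ht
  have average_le : ∀ (f : ℝ → ℝ) (B : ℝ), (∀ s, 0 < s → |f s| ≤ B) →
      |∫ s in Ioi (0 : ℝ), stableDensity t s * f s| ≤ B := by
    intro f B hf
    have hB : ∫ s in Ioi (0 : ℝ), stableDensity t s * B = B := by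
      rw [integral_mul_const, integral_stableDensity ht, one_mul]
    conv_rhs => rw [← hB]
    rw [← Real.norm_eq_abs]
    refine norm_integral_le_of_norm_le (hρ.mul_const B) ?_
    filter_upwards [ae_restrict_mem measurableSet_Ioi] with s hs
    rw [norm_mul, Real.norm_eq_abs, Real.norm_eq_abs, abs_of_nonneg (stableDensity_nonneg ht hs)]
    exact mul_le_mul_of_nonneg_left (hf s hs) (stableDensity_nonneg ht hs)
  refine ⟨fun x hx => ?_, fun x hx => ?_, fun x₁ x₂ hx₁ hx₂ => ?_⟩
  · rw [hu.poissonSemigroup_eq hα hα1 hlam ht hx]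
    have e1 := average_le (fun s => heatSemigroup lam u s x) (C₁ * N * x ^ α)
      fun s hs => (h₁ N u hu s hs).1 x hx
    have e2 := hu.abs_le hx.le
    have e3 := abs_sub (∫ s in Ioi (0 : ℝ), stableDensity t s * heatSemigroup lam u s x) (u x)
    have e4 : 0 ≤ C₁ * C₂ * N * x ^ α := by positivity
    linarith
  · have he : poissonSemigroup lam u t x - u x =
        ∫ s in Ioi (0 : ℝ), stableDensity t s * (heatSemigroup lam u s x - u x) := by
      simp only [mul_sub]
      rw [integral_sub (hu.integrableOn_stableDensity_mul_heatSemigroup hα hα1 hlam ht hx)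
        (hρ.mul_const _), integral_mul_const, integral_stableDensity ht, one_mul,
        hu.poissonSemigroup_eq hα hα1 hlam ht hx]
    obtain ⟨hi, hv⟩ := h₂ t ht
    have e1 : |poissonSemigroup lam u t x - u x| ≤ C₁ * N * (C₂ * t ^ α) := by
      rw [he, ← hv, ← integral_const_mul, ← Real.norm_eq_abs]
      refine norm_integral_le_of_norm_le (hi.const_mul _) ?_
      filter_upwards [ae_restrict_mem measurableSet_Ioi] with s hs
      rw [norm_mul, Real.norm_eq_abs, Real.norm_eq_abs,
        abs_of_nonneg (stableDensity_nonneg ht hs)]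
      have := mul_le_mul_of_nonneg_left ((h₁ N u hu s hs).2.1 x hx) (stableDensity_nonneg ht hs)
      linarith
    have e2 : 0 ≤ (C₁ + 1) * N * t ^ α := by positivity
    linarith
  · have he : poissonSemigroup lam u t x₁ - poissonSemigroup lam u t x₂ =
        ∫ s in Ioi (0 : ℝ),
          stableDensity t s * (heatSemigroup lam u s x₁ - heatSemigroup lam u s x₂) := by
      simp only [mul_sub]
      rw [integral_sub (hu.integrableOn_stableDensity_mul_heatSemigroup hα hα1 hlam ht hx₁)
        (hu.integrableOn_stableDensity_mul_heatSemigroup hα hα1 hlam ht hx₂),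
        hu.poissonSemigroup_eq hα hα1 hlam ht hx₁, hu.poissonSemigroup_eq hα hα1 hlam ht hx₂]
    have e1 := average_le (fun s => heatSemigroup lam u s x₁ - heatSemigroup lam u s x₂)
      (C₁ * N * |x₁ - x₂| ^ α) fun s hs => (h₁ N u hu s hs).2.2 x₁ x₂ hx₁ hx₂
    rw [← he] at e1
    have e2 := hu.abs_sub_le x₁ x₂
    have e3 := abs_sub (poissonSemigroup lam u t x₁ - poissonSemigroup lam u t x₂) (u x₁ - u x₂)
    rw [sub_sub_sub_comm]
    have e4 : 0 ≤ C₁ * C₂ * N * |x₁ - x₂| ^ α := by positivity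
    linarith

lemma integral_mul_rpow_bound {α β A B r : ℝ} {D : ℝ → ℝ} (hβ : 0 < β) (hαβ : 0 < α - β)
    (hr : 0 < r) (hD : AEStronglyMeasurable D (volume.restrict (Ioi 0)))
    (hA : ∀ t, 0 < t → |D t| ≤ A * t ^ α) (hB : ∀ t, 0 < t → |D t| ≤ B) :
    IntegrableOn (fun t => D t * t ^ (-1 - β)) (Ioi 0) ∧
      |∫ t in Ioi (0 : ℝ), D t * t ^ (-1 - β)| ≤
        A * (r ^ (α - β) / (α - β)) + B * (r ^ (-β) / β) := by
  have hm : AEStronglyMeasurable (fun t => D t * t ^ (-1 - β)) (volume.restrict (Ioi 0)) :=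
    hD.mul (Measurable.pow_const measurable_id _).aestronglyMeasurable
  have hiA : IntegrableOn (fun t : ℝ => t ^ (α - β - 1)) (Ioc 0 r) :=
    (intervalIntegrable_iff_integrableOn_Ioc_of_le hr.le).1
      (intervalIntegral.intervalIntegrable_rpow' (by linarith))
  have hvA : ∫ t in Ioc 0 r, t ^ (α - β - 1) = r ^ (α - β) / (α - β) := by
    rw [← intervalIntegral.integral_of_le hr.le, integral_rpow (Or.inl (by linarith)),
      sub_add_cancel, Real.zero_rpow hαβ.ne', sub_zero]
  have hiB : IntegrableOn (fun t : ℝ => t ^ (-1 - β)) (Ioi r) :=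
    integrableOn_Ioi_rpow_of_lt (by linarith) hr
  have hvB : ∫ t in Ioi r, t ^ (-1 - β) = r ^ (-β) / β := by
    rw [integral_Ioi_rpow_of_lt (by linarith) hr, show -1 - β + 1 = -β by ring, neg_div_neg_eq]
  have hbA : ∀ᵐ t ∂volume.restrict (Ioc 0 r), ‖D t * t ^ (-1 - β)‖ ≤ A * t ^ (α - β - 1) := by
    filter_upwards [ae_restrict_mem measurableSet_Ioc] with t ht
    have ht0 : 0 < t := ht.1
    rw [norm_mul, Real.norm_eq_abs, Real.norm_eq_abs, abs_of_pos (Real.rpow_pos_of_pos ht0 _),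
      show α - β - 1 = α + (-1 - β) by ring, Real.rpow_add ht0, ← mul_assoc]
    exact mul_le_mul_of_nonneg_right (hA t ht0) (by positivity)
  have hbB : ∀ᵐ t ∂volume.restrict (Ioi r), ‖D t * t ^ (-1 - β)‖ ≤ B * t ^ (-1 - β) := by
    filter_upwards [ae_restrict_mem measurableSet_Ioi] with t ht
    have ht0 : 0 < t := hr.trans ht
    rw [norm_mul, Real.norm_eq_abs, Real.norm_eq_abs, abs_of_pos (Real.rpow_pos_of_pos ht0 _)]
    exact mul_le_mul_of_nonneg_right (hB t ht0) (by positivity)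
  have i1 : IntegrableOn (fun t => D t * t ^ (-1 - β)) (Ioc 0 r) :=
    Integrable.mono' (hiA.const_mul A) (hm.mono_set Ioc_subset_Ioi_self) hbA
  have i2 : IntegrableOn (fun t => D t * t ^ (-1 - β)) (Ioi r) :=
    Integrable.mono' (hiB.const_mul B) (hm.mono_set (Ioi_subset_Ioi hr.le)) hbB
  rw [← Ioc_union_Ioi_eq_Ioi hr.le]
  refine ⟨i1.union i2, ?_⟩
  rw [setIntegral_union (Ioc_disjoint_Ioi le_rfl) measurableSet_Ioi i1 i2]
  have n1 := norm_integral_le_of_norm_le (hiA.const_mul A) hbA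
  have n2 := norm_integral_le_of_norm_le (hiB.const_mul B) hbB
  rw [integral_const_mul, Real.norm_eq_abs] at n1 n2
  rw [hvA] at n1
  rw [hvB] at n2
  exact (abs_add_le _ _).trans (add_le_add n1 n2)

lemma memHolderPlus_and_norm_le {β M : ℝ} {v : ℝ → ℝ} (hβ : 0 < β) (hM : 0 ≤ M)
    (hgrowth : ∀ x, 0 < x → |v x| ≤ M * x ^ β)
    (hholder : ∀ x₁ x₂, 0 < x₁ → 0 < x₂ → |v x₁ - v x₂| ≤ M * |x₁ - x₂| ^ β) :
    MemHolderPlus β v ∧ holderPlusNorm β v ≤ 2 * M := by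
  have h1 : ∀ r ∈ holderRatioSet β v, r ≤ M := by
    rintro r ⟨x, y, hx, hy, hxy, rfl⟩
    have : 0 < |x - y| := abs_pos.2 (sub_ne_zero.2 hxy)
    rw [div_le_iff₀ (by positivity)]
    exact hholder x y hx hy
  have h2 : ∀ r ∈ growthRatioSet β v, r ≤ M := by
    rintro r ⟨x, hx, rfl⟩
    rw [div_le_iff₀ (by positivity)]
    exact hgrowth x hx
  refine ⟨⟨fun x hx => ?_, ⟨M, h1⟩, ⟨M, h2⟩⟩, ?_⟩
  · rw [ContinuousWithinAt, tendsto_iff_dist_tendsto_zero]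
    have h : Continuous fun y : ℝ => M * |y - x| ^ β :=
      continuous_const.mul
        ((continuous_id.sub continuous_const).abs.rpow_const fun _ => Or.inr hβ.le)
    have h0 : Tendsto (fun y : ℝ => M * |y - x| ^ β) (nhdsWithin x (Ioi 0)) (nhds 0) := by
      have := (h.tendsto x).mono_left (nhdsWithin_le_nhds (s := Ioi 0))
      simpa [Real.zero_rpow hβ.ne'] using this
    refine squeeze_zero' (Eventually.of_forall fun _ => dist_nonneg) ?_ h0
    filter_upwards [self_mem_nhdsWithin] with y hy
    exact hholder y x hy hx
  · rw [holderPlusNorm, two_mul]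
    exact add_le_add (Real.sSup_le h1 hM) (Real.sSup_le h2 hM)

lemma sSup_holderRatioSet_nonneg (α : ℝ) (u : ℝ → ℝ) : 0 ≤ sSup (holderRatioSet α u) := by
  refine Real.sSup_nonneg ?_
  rintro r ⟨x, y, -, -, -, rfl⟩
  positivity

lemma sSup_growthRatioSet_nonneg (α : ℝ) (u : ℝ → ℝ) : 0 ≤ sSup (growthRatioSet α u) := by
  refine Real.sSup_nonneg ?_
  rintro r ⟨x, hx, rfl⟩
  positivity

lemma holderPlusNorm_nonneg (α : ℝ) (u : ℝ → ℝ) : 0 ≤ holderPlusNorm α u :=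
  add_nonneg (sSup_holderRatioSet_nonneg α u) (sSup_growthRatioSet_nonneg α u)

/-- Extending a function of `C^α_+` by zero gives a Hölder function on the line. -/
lemma MemHolderPlus.halfLineHolder_indicator {α : ℝ} {u : ℝ → ℝ} (hu : MemHolderPlus α u)
    (hα : 0 < α) : HalfLineHolder α (holderPlusNorm α u) ((Ioi 0).indicator u) := by
  have hN := holderPlusNorm_nonneg α u
  have hs1 := sSup_holderRatioSet_nonneg α u
  have hs2 := sSup_growthRatioSet_nonneg α u
  have hgrowth : ∀ x y, 0 < x → y ≤ 0 → |u x| ≤ holderPlusNorm α u * |x - y| ^ α := by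
    intro x y hx hy
    have h1 : |u x| / x ^ α ≤ holderPlusNorm α u :=
      (le_csSup hu.2.2 ⟨x, hx, rfl⟩).trans (by rw [holderPlusNorm]; linarith)
    rw [div_le_iff₀ (by positivity)] at h1
    refine h1.trans (mul_le_mul_of_nonneg_left (Real.rpow_le_rpow hx.le ?_ hα.le) hN)
    exact (by linarith : x ≤ x - y).trans (le_abs_self _)
  refine ⟨fun x y => ?_, fun x hx => indicator_of_notMem (by simpa using hx) u⟩
  rcases lt_or_ge 0 x with hx | hx <;> rcases lt_or_ge 0 y with hy | hy
  · rw [indicator_of_mem (mem_Ioi.2 hx), indicator_of_mem (mem_Ioi.2 hy)]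
    rcases eq_or_ne x y with rfl | hxy
    · simp only [sub_self, abs_zero]
      positivity
    have hd : 0 < |x - y| := abs_pos.2 (sub_ne_zero.2 hxy)
    have h1 : |u x - u y| / |x - y| ^ α ≤ holderPlusNorm α u :=
      (le_csSup hu.2.1 ⟨x, y, hx, hy, hxy, rfl⟩).trans (by rw [holderPlusNorm]; linarith)
    rwa [div_le_iff₀ (by positivity)] at h1
  · rw [indicator_of_mem (mem_Ioi.2 hx), indicator_of_notMem (by simpa using hy), sub_zero]
    exact hgrowth x y hx hy
  · rw [indicator_of_mem (mem_Ioi.2 hy), indicator_of_notMem (by simpa using hx), zero_sub,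
      abs_neg, abs_sub_comm]
    exact hgrowth y x hy hx
  · rw [indicator_of_notMem (by simpa using hx), indicator_of_notMem (by simpa using hy), sub_self,
      abs_zero]
    positivity

lemma poissonSemigroup_indicator (lam t x : ℝ) (u : ℝ → ℝ) :
    poissonSemigroup lam ((Ioi 0).indicator u) t x = poissonSemigroup lam u t x :=
  setIntegral_congr_fun measurableSet_Ioi fun y hy => by
    simp only [indicator_of_mem hy]

/-- Hölder estimate for the positive power `Δ_λ^{σ}` (Theorem A(b)). -/
theorem holder_estimate_positive_power
    (lam σ α : ℝ) (hlam : 1 ≤ lam) (hσ0 : 0 < σ) (hσ1 : σ < 1)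
    (hα1 : α < 1) (h1 : 0 < α - 2 * σ) (h2 : α - 2 * σ < 1) :
    ∃ C : ℝ, 0 < C ∧ ∀ u : ℝ → ℝ, MemHolderPlus α u →
      IntegrableOn (fun x => |u x| / (1 + x) ^ (1 + 2 * σ)) (Set.Ioi 0) →
      (∀ t : ℝ, 0 < t → ∀ x : ℝ, 0 < x →
        IntegrableOn (fun y => besselPoissonKernel lam t x y * u y) (Set.Ioi 0)) ∧
      (∀ x : ℝ, 0 < x →
        IntegrableOn (fun t => (poissonSemigroup lam u t x - u x) * t ^ (-1 - 2 * σ))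
          (Set.Ioi 0)) ∧
      MemHolderPlus (α - 2 * σ)
        (fun x => 1 / gammaNeg (2 * σ) *
          ∫ t in Set.Ioi (0 : ℝ), (poissonSemigroup lam u t x - u x) * t ^ (-1 - 2 * σ)) ∧
      holderPlusNorm (α - 2 * σ)
          (fun x => 1 / gammaNeg (2 * σ) *
            ∫ t in Set.Ioi (0 : ℝ), (poissonSemigroup lam u t x - u x) * t ^ (-1 - 2 * σ)) ≤
        C * holderPlusNorm α u := by
  have hα : 0 < α := by linarith
  obtain ⟨C₀, hC₀, hP⟩ := exists_poissonSemigroup_bounds hlam hα hα1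
  set κ : ℝ := 2 / (α - 2 * σ) + 1 / (2 * σ) with hκ
  have hκ0 : 0 < κ := by positivity
  refine ⟨2 * (|1 / gammaNeg (2 * σ)| * (C₀ * κ)) + 1, by positivity, fun u hu _ => ?_⟩
  have hN := holderPlusNorm_nonneg α u
  set N := holderPlusNorm α u with hNd
  have hw := hu.halfLineHolder_indicator hα
  have hwu : ∀ x, 0 < x → (Ioi 0).indicator u x = u x := fun x hx =>
    indicator_of_mem (mem_Ioi.2 hx) u
  have hmeas : ∀ x, 0 < x → AEStronglyMeasurable
      (fun t => poissonSemigroup lam u t x - u x) (volume.restrict (Ioi 0)) := fun x hx => by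
    have := hw.aestronglyMeasurable_poissonSemigroup hα hα1 hlam hx
    simp only [poissonSemigroup_indicator] at this
    exact this.sub aestronglyMeasurable_const
  have hbx : ∀ t, 0 < t → ∀ x, 0 < x → |poissonSemigroup lam u t x - u x| ≤ C₀ * N * x ^ α :=
    fun t ht x hx => by
      simpa only [poissonSemigroup_indicator, hwu x hx] using (hP N _ hw t ht).1 x hx
  have hbt : ∀ t, 0 < t → ∀ x, 0 < x → |poissonSemigroup lam u t x - u x| ≤ C₀ * N * t ^ α :=
    fun t ht x hx => by
      simpa only [poissonSemigroup_indicator, hwu x hx] using (hP N _ hw t ht).2.1 x hx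
  have hbd : ∀ t, 0 < t → ∀ x₁ x₂, 0 < x₁ → 0 < x₂ →
      |(poissonSemigroup lam u t x₁ - u x₁) - (poissonSemigroup lam u t x₂ - u x₂)| ≤
        C₀ * N * |x₁ - x₂| ^ α := fun t ht x₁ x₂ hx₁ hx₂ => by
    simpa only [poissonSemigroup_indicator, hwu x₁ hx₁, hwu x₂ hx₂] using
      (hP N _ hw t ht).2.2 x₁ x₂ hx₁ hx₂
  have hσ : 0 < 2 * σ := by linarith
  have hint : ∀ x, 0 < x → IntegrableOn
      (fun t => (poissonSemigroup lam u t x - u x) * t ^ (-1 - 2 * σ)) (Ioi 0) := fun x hx =>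
    (integral_mul_rpow_bound hσ h1 one_pos (hmeas x hx) (fun t ht => hbt t ht x hx)
      fun t ht => hbx t ht x hx).1
  have combine : ∀ r, 0 < r → 2 * (C₀ * N) * (r ^ (α - 2 * σ) / (α - 2 * σ)) +
      C₀ * N * r ^ α * (r ^ (-(2 * σ)) / (2 * σ)) = C₀ * κ * N * r ^ (α - 2 * σ) := fun r hr => by
    have : r ^ (α - 2 * σ) = r ^ α * r ^ (-(2 * σ)) := by
      rw [← Real.rpow_add hr, sub_eq_add_neg]
    rw [this, hκ]
    ring
  have main := memHolderPlus_and_norm_le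
    (v := fun x => 1 / gammaNeg (2 * σ) *
      ∫ t in Set.Ioi (0 : ℝ), (poissonSemigroup lam u t x - u x) * t ^ (-1 - 2 * σ))
    (M := |1 / gammaNeg (2 * σ)| * (C₀ * κ * N)) h1 (by positivity) ?_ ?_
  · refine ⟨fun t ht x hx => ?_, hint, main.1, main.2.trans ?_⟩
    · refine (hw.integrableOn_besselPoissonKernel_mul hα hα1 hlam ht hx).congr_fun
        (fun y hy => ?_) measurableSet_Ioi
      simp only [hwu y hy]
    · linarith
  · intro x hx
    have h := (integral_mul_rpow_bound hσ h1 hx (hmeas x hx) (A := 2 * (C₀ * N))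
      (fun t ht => (hbt t ht x hx).trans (by
        have : 0 ≤ C₀ * N * t ^ α := by positivity
        linarith)) fun t ht => hbx t ht x hx).2
    rw [combine x hx] at h
    rw [abs_mul, mul_assoc]
    exact mul_le_mul_of_nonneg_left h (abs_nonneg _)
  · intro x₁ x₂ hx₁ hx₂
    rcases eq_or_ne x₁ x₂ with rfl | hne
    · simp only [sub_self, abs_zero]
      positivity
    have hd : 0 < |x₁ - x₂| := abs_pos.2 (sub_ne_zero.2 hne)
    have h := (integral_mul_rpow_bound hσ h1 hd ((hmeas x₁ hx₁).sub (hmeas x₂ hx₂))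
      (A := 2 * (C₀ * N)) (fun t ht => (abs_sub _ _).trans (by
        have e1 := hbt t ht x₁ hx₁
        have e2 := hbt t ht x₂ hx₂
        linarith)) fun t ht => hbd t ht x₁ x₂ hx₁ hx₂).2
    rw [combine _ hd] at h
    simp only [Pi.sub_apply, sub_mul (poissonSemigroup lam u _ x₁ - u x₁)] at h
    rw [integral_sub (hint x₁ hx₁) (hint x₂ hx₂)] at h
    rw [← mul_sub, abs_mul, mul_assoc]
    exact mul_le_mul_of_nonneg_left h (abs_nonneg _)
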